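/- arXiv:2605.20527 — 2 statements merged into one kernel-verified Lean document; each statement's English description precedes it below -/
import Mathlib

section
/- There exists a constant c* > 0 such that for every F in the Bargmann–Fock space F²(ℂ) with ‖F‖_γ = 1 one has ∫_ℂ |F'(z)|² dγ(z) ≥ ∫_ℂ |F(z)|² ln|F(z)|² dγ(z) + c* · inf_{β ∈ ℂ, |c|=1} ‖F − c e^{βz − |β|²/2}‖_γ², where F' is the complex derivative of the entire function F. -/
open MeasureTheory

/-- The Fock norm of a function `F : ℂ → E`:
`‖F‖_γ² = (1/π) ∫_ℂ ‖F(z)‖² e^{-|z|²} dm(z)`. -/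
noncomputable def fockNorm {E : Type*} [NormedAddCommGroup E] (F : ℂ → E) : ℝ :=
  Real.sqrt ((1 / Real.pi) * ∫ z : ℂ, ‖F z‖ ^ 2 * Real.exp (-‖z‖ ^ 2))

/-- Integral against the normalized Gaussian measure `dγ(z) = (1/π) e^{−|z|²} dm(z)`. -/
noncomputable def gammaInt (f : ℂ → ℝ) : ℝ :=
  (1 / Real.pi) * ∫ z : ℂ, f z * Real.exp (-‖z‖ ^ 2)


/-- One-dimensional log-Sobolev inequality on an interval, by monotone transport. -/
lemma lsi1 (L : ℝ) (hL : 0 < L) (f f' : ℝ → ℝ) (hf : ∀ x, HasDerivAt f (f' x) x)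
    (hf'c : Continuous f') (hpos : ∀ x, 0 < f x) :
    (∫ x in (-L)..L, f x * Real.log (f x) * Real.exp (-x ^ 2))
      - (∫ x in (-L)..L, f x * Real.exp (-x ^ 2)) *
        Real.log ((∫ x in (-L)..L, f x * Real.exp (-x ^ 2)) / (∫ x in (-L)..L, Real.exp (-x ^ 2)))
      ≤ ∫ x in (-L)..L, f' x ^ 2 / (4 * f x) * Real.exp (-x ^ 2) := by
  have hfc : Continuous f := continuous_iff_continuousAt.2 fun x => (hf x).continuousAt
  have hLL : -L < L := by linarith
  set w : ℝ → ℝ := fun x => Real.exp (-x ^ 2) with hw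
  have hwc : Continuous w := by fun_prop
  set v : ℝ → ℝ := fun x => max (w x) (Real.exp (-L ^ 2)) with hv
  have hvc : Continuous v := hwc.max continuous_const
  have hvpos : ∀ x, 0 < v x := fun x => lt_max_of_lt_left (Real.exp_pos _)
  have hvw : ∀ x ∈ Set.Icc (-L) L, v x = w x := by
    intro x hx
    refine max_eq_left (Real.exp_le_exp.2 ?_)
    nlinarith [hx.1, hx.2]
  set e0 := Real.exp (-L ^ 2) with he0
  have he0pos : 0 < e0 := Real.exp_pos _
  set Z := ∫ x in (-L)..L, w x with hZ
  have hZpos : 0 < Z := intervalIntegral.intervalIntegral_pos_of_pos (hwc.intervalIntegrable _ _) (fun x => Real.exp_pos _) hLL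
  have hfwc : Continuous fun x => f x * w x := hfc.mul hwc
  set m := ∫ x in (-L)..L, f x * w x with hm
  have hmpos : 0 < m := intervalIntegral.intervalIntegral_pos_of_pos (hfwc.intervalIntegrable _ _)
    (fun x => mul_pos (hpos x) (Real.exp_pos _)) hLL
  set q := m / Z with hq
  have hqpos : 0 < q := div_pos hmpos hZpos
  set G : ℝ → ℝ := fun x => ∫ t in (-L)..x, v t with hG
  have hGd : ∀ x, HasDerivAt G (v x) x := fun x =>
    intervalIntegral.integral_hasDerivAt_right (hvc.intervalIntegrable _ _)
      hvc.stronglyMeasurable.stronglyMeasurableAtFilter hvc.continuousAt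
  have hGmono : StrictMono G := strictMono_of_hasDerivAt_pos hGd hvpos
  have hGc : Continuous G := continuous_iff_continuousAt.2 fun x => (hGd x).continuousAt
  have hGL : G (-L) = 0 := by simp [hG]
  have hGZ : G L = Z := by
    apply intervalIntegral.integral_congr
    intro x hx
    rw [Set.uIcc_of_le hLL.le] at hx
    exact hvw x hx
  have hGlow : ∀ x y, x ≤ y → e0 * (y - x) ≤ G y - G x := by
    intro x y hxy
    have h1 : G y - G x = ∫ t in x..y, v t :=
      intervalIntegral.integral_interval_sub_left (hvc.intervalIntegrable _ _) (hvc.intervalIntegrable _ _)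
    rw [h1]
    have : ∫ t in x..y, e0 ≤ ∫ t in x..y, v t :=
      intervalIntegral.integral_mono hxy (by simp) (hvc.intervalIntegrable _ _) (fun t => le_max_right _ _)
    simpa [mul_comm] using this
  have hGsurj : Function.Surjective G := by
    apply hGc.surjective
    · refine Filter.tendsto_atTop_mono' _ (f₁ := fun x => e0 * (x - 0) + G 0) ?_ ?_
      · filter_upwards [Filter.eventually_ge_atTop 0] with x hx
        linarith [hGlow 0 x hx]
      · apply Filter.tendsto_atTop_add_const_right
        simpa using (Filter.tendsto_id.const_mul_atTop he0pos)
    · refine Filter.tendsto_atBot_mono' (f₁ := fun x => e0 * (x - 0) + G 0) _ ?_ ?_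
      · filter_upwards [Filter.eventually_le_atBot 0] with x hx
        linarith [hGlow x 0 hx]
      · apply Filter.tendsto_atBot_add_const_right
        simpa using (Filter.tendsto_id.const_mul_atBot he0pos)
  let e := hGmono.orderIsoOfSurjective G hGsurj
  have heG : ∀ x, e x = G x := fun x => rfl
  set H : ℝ → ℝ := fun x => (∫ t in (-L)..x, f t * w t) / q with hH
  have hHd : ∀ x, HasDerivAt H (f x * w x / q) x := fun x =>
    (intervalIntegral.integral_hasDerivAt_right (hfwc.intervalIntegrable _ _)
      hfwc.stronglyMeasurable.stronglyMeasurableAtFilter hfwc.continuousAt).div_const q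
  have hHmono : StrictMono H := strictMono_of_hasDerivAt_pos hHd
    (fun x => div_pos (mul_pos (hpos x) (Real.exp_pos _)) hqpos)
  have hHL : H (-L) = 0 := by simp [hH]
  have hHZ : H L = Z := by
    simp only [hH, hq]
    rw [← hm]
    field_simp
  set T : ℝ → ℝ := fun x => e.symm (H x) with hT
  have hGT : ∀ x, G (T x) = H x := fun x => by
    rw [← heG]; simp [hT]
  have hGsymm : ∀ y, HasDerivAt e.symm (v (e.symm y))⁻¹ y := by
    intro y
    refine HasDerivAt.of_local_left_inverse (f := G) e.symm.continuous.continuousAt (hGd _) (hvpos _).ne' ?_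
    filter_upwards with z
    rw [← heG]; simp
  have hTd : ∀ x, HasDerivAt T ((v (T x))⁻¹ * (f x * w x / q)) x := fun x =>
    (hGsymm (H x)).comp x (hHd x)
  have hTc : Continuous T := continuous_iff_continuousAt.2 fun x => (hTd x).continuousAt
  have hTL : T (-L) = -L := hGmono.injective (by rw [hGT, hHL, hGL])
  have hTL' : T L = L := hGmono.injective (by rw [hGT, hHZ, hGZ])
  have hTmem : ∀ x ∈ Set.Icc (-L) L, T x ∈ Set.Icc (-L) L := by
    intro x hx
    constructor
    · rw [← hGmono.le_iff_le, hGT, hGL, ← hHL]; exact hHmono.monotone hx.1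
    · rw [← hGmono.le_iff_le, hGT, hGZ, ← hHZ]; exact hHmono.monotone hx.2
  have hwd : ∀ x, HasDerivAt w (w x * (-(2 * x))) x := by
    intro x
    have := ((hasDerivAt_pow 2 x).neg).exp
    simpa [hw] using this
  set T' : ℝ → ℝ := fun x => (v (T x))⁻¹ * (f x * w x / q) with hT'
  have hT'c : Continuous T' := by
    have : Continuous fun x => (v (T x))⁻¹ := (hvc.comp hTc).inv₀ (fun x => (hvpos _).ne')
    exact this.mul ((hfwc).div_const q)
  -- the boundary term
  set B : ℝ → ℝ := fun x => (T x - x) * (f x * w x) with hB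
  set B' : ℝ → ℝ := fun x => (T' x - 1) * (f x * w x) + (T x - x) * (f' x * w x + f x * (w x * (-(2 * x)))) with hB'
  have hBd : ∀ x, HasDerivAt B (B' x) x := by
    intro x
    exact ((hTd x).sub (hasDerivAt_id x)).mul ((hf x).mul (hwd x))
  have hB'c : Continuous B' := by
    simp only [hB']
    fun_prop
  have hBint : ∫ x in (-L)..L, B' x = 0 := by
    rw [intervalIntegral.integral_eq_sub_of_hasDerivAt (fun x _ => hBd x) (hB'c.intervalIntegrable _ _)]
    simp [hB, hTL, hTL']
  have hf1c : Continuous fun x => f' x ^ 2 / (4 * f x) * w x := by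
    refine ((hf'c.pow 2).div (continuous_const.mul hfc) (fun x => ?_)).mul hwc
    exact mul_ne_zero (by norm_num) (hpos x).ne'
  have hlogc : Continuous fun x => f x * Real.log (f x) * w x :=
    (hfc.mul (hfc.log (fun x => (hpos x).ne'))).mul hwc
  have key : ∀ x ∈ Set.Icc (-L) L, f x * Real.log (f x) * w x - f x * w x * Real.log q
      ≤ B' x + f' x ^ 2 / (4 * f x) * w x := by
    intro x hx
    have hfx := hpos x
    have hwx : 0 < w x := Real.exp_pos _
    have hvT : v (T x) = w (T x) := hvw _ (hTmem x hx)
    have hwT : 0 < w (T x) := Real.exp_pos _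
    have hT'x : T' x = f x * w x / (q * w (T x)) := by
      simp only [hT']; rw [hvT]; field_simp
    have hT'pos : 0 < T' x := by rw [hT'x]; positivity
    have hlog : Real.log (T' x) = Real.log (f x) - x ^ 2 - Real.log q + (T x) ^ 2 := by
      rw [hT'x, Real.log_div (by positivity) (by positivity), Real.log_mul hfx.ne' hwx.ne',
        Real.log_mul hqpos.ne' hwT.ne']
      simp [hw]; ring
    have hle : Real.log (T' x) ≤ T' x - 1 := Real.log_le_sub_one_of_pos hT'pos
    have h3 : 0 ≤ f' x ^ 2 / (4 * f x) + (T x - x) * f' x + (T x - x) ^ 2 * f x := by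
      have : f' x ^ 2 / (4 * f x) + (T x - x) * f' x + (T x - x) ^ 2 * f x
          = (f' x + 2 * (T x - x) * f x) ^ 2 / (4 * f x) := by field_simp; ring
      rw [this]; positivity
    have h4 : f x * w x * (Real.log (T' x)) ≤ f x * w x * (T' x - 1) :=
      mul_le_mul_of_nonneg_left hle (by positivity)
    rw [hlog] at h4
    have h5 := mul_nonneg h3 hwx.le
    simp only [hB']
    nlinarith
  have c1 : Continuous fun x => f x * Real.log (f x) * w x - f x * w x * Real.log q :=
    hlogc.sub (hfwc.mul continuous_const)
  have c3 : Continuous fun x => f x * w x * Real.log q := hfwc.mul continuous_const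
  have c2 : Continuous fun x => B' x + f' x ^ 2 / (4 * f x) * w x := hB'c.add hf1c
  have hfin : (∫ x in (-L)..L, (f x * Real.log (f x) * w x - f x * w x * Real.log q))
      ≤ ∫ x in (-L)..L, (B' x + f' x ^ 2 / (4 * f x) * w x) :=
    intervalIntegral.integral_mono_on hLL.le (c1.intervalIntegrable _ _) (c2.intervalIntegrable _ _) key
  rw [intervalIntegral.integral_sub (hlogc.intervalIntegrable _ _)
    (c3.intervalIntegrable _ _),
    intervalIntegral.integral_add (hB'c.intervalIntegrable _ _) (hf1c.intervalIntegrable _ _), hBint,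
    intervalIntegral.integral_mul_const] at hfin
  rw [zero_add] at hfin
  exact hfin


lemma swap_cont (L : ℝ) (g : ℝ → ℝ → ℝ) (hg : Continuous (Function.uncurry g)) :
    ∫ x in (-L)..L, ∫ y in (-L)..L, g x y = ∫ y in (-L)..L, ∫ x in (-L)..L, g x y := by
  apply intervalIntegral_intervalIntegral_swap
  have : IntegrableOn (Function.uncurry g) (Set.uIcc (-L) L ×ˢ Set.uIcc (-L) L) :=
    hg.continuousOn.integrableOn_compact (isCompact_uIcc.prod isCompact_uIcc)
  exact this.mono_set (Set.prod_mono Set.uIoc_subset_uIcc Set.uIoc_subset_uIcc)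

/-- Two-dimensional log-Sobolev inequality on a square. -/
lemma lsi2 (L : ℝ) (hL : 0 < L) (f fx fy : ℝ → ℝ → ℝ)
    (hfc : Continuous (Function.uncurry f))
    (hx : ∀ x y, HasDerivAt (fun t => f t y) (fx x y) x)
    (hy : ∀ x y, HasDerivAt (fun t => f x t) (fy x y) y)
    (hxc : Continuous (Function.uncurry fx)) (hyc : Continuous (Function.uncurry fy))
    (hpos : ∀ x y, 0 < f x y) :
    (∫ y in (-L)..L, ∫ x in (-L)..L, f x y * Real.log (f x y) * (Real.exp (-x ^ 2) * Real.exp (-y ^ 2)))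
      - (∫ y in (-L)..L, ∫ x in (-L)..L, f x y * (Real.exp (-x ^ 2) * Real.exp (-y ^ 2))) *
        Real.log ((∫ y in (-L)..L, ∫ x in (-L)..L, f x y * (Real.exp (-x ^ 2) * Real.exp (-y ^ 2))) /
          (∫ x in (-L)..L, Real.exp (-x ^ 2)) ^ 2)
      ≤ ∫ y in (-L)..L, ∫ x in (-L)..L, (fx x y ^ 2 + fy x y ^ 2) / (4 * f x y)
          * (Real.exp (-x ^ 2) * Real.exp (-y ^ 2)) := by
  have hLL : -L < L := by linarith
  set w : ℝ → ℝ := fun x => Real.exp (-x ^ 2) with hw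
  have hwc : Continuous w := by fun_prop
  have hwpos : ∀ x, 0 < w x := fun x => Real.exp_pos _
  set Z := ∫ x in (-L)..L, w x with hZ
  have hZpos : 0 < Z := intervalIntegral.intervalIntegral_pos_of_pos (hwc.intervalIntegrable _ _) (fun x => Real.exp_pos _) hLL
  have hlogc : Continuous fun p : ℝ × ℝ => Real.log (f p.1 p.2) :=
    hfc.log (fun p => (hpos p.1 p.2).ne')
  have hfc' : Continuous fun p : ℝ × ℝ => f p.1 p.2 := hfc
  have hxc' : Continuous fun p : ℝ × ℝ => fx p.1 p.2 := hxc
  have hyc' : Continuous fun p : ℝ × ℝ => fy p.1 p.2 := hyc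
  have hf4 : ∀ p : ℝ × ℝ, 4 * f p.1 p.2 ≠ 0 := fun p => mul_ne_zero (by norm_num) (hpos _ _).ne'
  have hw1 : Continuous fun p : ℝ × ℝ => w p.1 := hwc.comp continuous_fst
  have hw2 : Continuous fun p : ℝ × ℝ => w p.2 := hwc.comp continuous_snd
  have parY : ∀ g : ℝ → ℝ → ℝ, Continuous (fun p : ℝ × ℝ => g p.1 p.2) →
      Continuous fun y => ∫ x in (-L)..L, g x y := by
    intro g hg
    apply intervalIntegral.continuous_parametric_intervalIntegral_of_continuous' (f := fun y x => g x y)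
    exact hg.comp continuous_swap
  have parX : ∀ g : ℝ → ℝ → ℝ, Continuous (fun p : ℝ × ℝ => g p.1 p.2) →
      Continuous fun x => ∫ y in (-L)..L, g x y := by
    intro g hg
    exact intervalIntegral.continuous_parametric_intervalIntegral_of_continuous' (f := g) hg _ _
  have secY : ∀ g : ℝ → ℝ → ℝ, Continuous (fun p : ℝ × ℝ => g p.1 p.2) → ∀ x, Continuous fun y => g x y := by
    intro g hg x
    exact hg.comp (by fun_prop : Continuous fun y : ℝ => (x, y))
  have secX : ∀ g : ℝ → ℝ → ℝ, Continuous (fun p : ℝ × ℝ => g p.1 p.2) → ∀ y, Continuous fun x => g x y := by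
    intro g hg y
    exact hg.comp (by fun_prop : Continuous fun x : ℝ => (x, y))
  set F1 : ℝ → ℝ := fun y => ∫ x in (-L)..L, f x y * w x with hF1
  set F2 : ℝ → ℝ := fun x => ∫ y in (-L)..L, f x y * w y with hF2
  have hF1c : Continuous F1 := parY (fun x y => f x y * w x) (hfc'.mul hw1)
  have hF2c : Continuous F2 := parX (fun x y => f x y * w y) (hfc'.mul hw2)
  have hF1pos : ∀ y, 0 < F1 y := fun y =>
    intervalIntegral.intervalIntegral_pos_of_pos
      ((secX (fun x y => f x y * w x) (hfc'.mul hw1) y).intervalIntegrable _ _)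
      (fun x => mul_pos (hpos x y) (hwpos x)) hLL
  have hF2pos : ∀ x, 0 < F2 x := fun x =>
    intervalIntegral.intervalIntegral_pos_of_pos
      ((secY (fun x y => f x y * w y) (hfc'.mul hw2) x).intervalIntegrable _ _)
      (fun y => mul_pos (hpos x y) (hwpos y)) hLL
  set m := ∫ y in (-L)..L, ∫ x in (-L)..L, f x y * (w x * w y) with hm
  have hmF1 : ∫ y in (-L)..L, F1 y * w y = m := by
    rw [hm]
    refine intervalIntegral.integral_congr fun y _ => ?_
    simp only [hF1]
    rw [← intervalIntegral.integral_mul_const]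
    refine intervalIntegral.integral_congr fun x _ => ?_
    ring
  have hmpos : 0 < m := by
    rw [← hmF1]
    exact intervalIntegral.intervalIntegral_pos_of_pos
      ((hF1c.mul hwc).intervalIntegrable _ _)
      (fun x => mul_pos (hF1pos x) (hwpos x)) hLL
  -- the function l(y) = log (F1 y * Z / m)
  set h : ℝ → ℝ := fun y => F1 y * Z / m with hh
  have hhpos : ∀ y, 0 < h y := fun y => div_pos (mul_pos (hF1pos y) hZpos) hmpos
  have hhc : Continuous h := (hF1c.mul continuous_const).div_const _
  have hhlog : Continuous fun y => Real.log (h y) := hhc.log (fun y => (hhpos y).ne')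
  have hhint : ∫ y in (-L)..L, h y * w y = Z := by
    have : ∀ y, h y * w y = (Z / m) * (F1 y * w y) := fun y => by simp only [hh]; ring
    simp only [this]
    rw [intervalIntegral.integral_const_mul, hmF1]; field_simp
  have step3 : ∀ x, ∫ y in (-L)..L, f x y * w y * Real.log (h y) ≤
      ∫ y in (-L)..L, fy x y ^ 2 / (4 * f x y) * w y := by
    intro x
    have h2 := lsi1 L hL (fun y => f x y) (fun y => fy x y) (fun y => hy x y)
      (secY fy hyc' x) (fun y => hpos x y)
    refine le_trans ?_ h2
    have hF2x := hF2pos x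
    change _ ≤ (∫ y in (-L)..L, f x y * Real.log (f x y) * w y) - F2 x * Real.log (F2 x / Z)
    have ca : Continuous fun y => f x y * Real.log (f x y) * w y :=
      ((secY f hfc' x).mul (secY (fun x y => Real.log (f x y)) hlogc x)).mul hwc
    have cb : Continuous fun y => f x y * w y := (secY f hfc' x).mul hwc
    have cc : Continuous fun y => f x y * w y * Real.log (h y) := cb.mul hhlog
    have cd : Continuous fun y => h y * w y := hhc.mul hwc
    have e1 : (∫ y in (-L)..L, (f x y * w y * Real.log (h y) + (f x y * w y - (F2 x / Z) * (h y * w y))))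
        = (∫ y in (-L)..L, f x y * w y * Real.log (h y)) + (F2 x - (F2 x / Z) * Z) := by
      have c5 : Continuous fun y => F2 x / Z * (h y * w y) := continuous_const.mul cd
      have c6 : Continuous fun y => f x y * w y - F2 x / Z * (h y * w y) := cb.sub c5
      rw [intervalIntegral.integral_add (cc.intervalIntegrable _ _) (c6.intervalIntegrable _ _)]
      congr 1
      rw [intervalIntegral.integral_sub (cb.intervalIntegrable _ _)
        (c5.intervalIntegrable _ _), intervalIntegral.integral_const_mul, hhint]
    have e2 : (∫ y in (-L)..L, (f x y * Real.log (f x y) * w y - f x y * w y * Real.log (F2 x / Z)))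
        = (∫ y in (-L)..L, f x y * Real.log (f x y) * w y) - F2 x * Real.log (F2 x / Z) := by
      have c3 : Continuous fun y => f x y * w y * Real.log (F2 x / Z) := cb.mul continuous_const
      rw [intervalIntegral.integral_sub (ca.intervalIntegrable _ _) (c3.intervalIntegrable _ _),
        intervalIntegral.integral_mul_const]
    have e3 : F2 x - (F2 x / Z) * Z = 0 := by field_simp; ring
    rw [e3, add_zero] at e1
    rw [← e1, ← e2]
    refine intervalIntegral.integral_mono hLL.le
      (((cc.add (cb.sub (continuous_const.mul cd))) : Continuous fun y => (f x y * w y * Real.log (h y) + (f x y * w y - (F2 x / Z) * (h y * w y)))).intervalIntegrable _ _)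
      ((ca.sub (cb.mul continuous_const) : Continuous fun y => (f x y * Real.log (f x y) * w y - f x y * w y * Real.log (F2 x / Z))).intervalIntegrable _ _) ?_
    intro y
    have hfp := hpos x y
    have hcp : 0 < F2 x / Z := div_pos hF2x hZpos
    have hhp := hhpos y
    have := Real.log_le_sub_one_of_pos (show 0 < F2 x / Z * h y / f x y by positivity)
    rw [Real.log_div (by positivity) hfp.ne', Real.log_mul hcp.ne' hhp.ne'] at this
    have h6 := mul_le_mul_of_nonneg_left this (mul_pos hfp (hwpos y)).le
    have h7 : f x y * w y * (F2 x / Z * h y / f x y - 1) = F2 x / Z * (h y * w y) - f x y * w y := by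
      field_simp
    rw [h7] at h6
    nlinarith
  have step1 : ∀ y, (∫ x in (-L)..L, f x y * Real.log (f x y) * w x) - F1 y * Real.log (F1 y / Z)
      ≤ ∫ x in (-L)..L, fx x y ^ 2 / (4 * f x y) * w x := by
    intro y
    exact lsi1 L hL (fun x => f x y) (fun x => fx x y) (fun x => hx x y)
      (secX fx hxc' y) (fun x => hpos x y)
  have cX : Continuous fun p : ℝ × ℝ => fx p.1 p.2 ^ 2 / (4 * f p.1 p.2) :=
    (hxc'.pow 2).div (continuous_const.mul hfc') hf4
  have cY : Continuous fun p : ℝ × ℝ => fy p.1 p.2 ^ 2 / (4 * f p.1 p.2) :=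
    (hyc'.pow 2).div (continuous_const.mul hfc') hf4
  have hh2 : Continuous fun p : ℝ × ℝ => Real.log (h p.2) := hhlog.comp continuous_snd
  have step4 : ∫ y in (-L)..L, F1 y * Real.log (h y) * w y ≤
      ∫ y in (-L)..L, ∫ x in (-L)..L, fy x y ^ 2 / (4 * f x y) * (w x * w y) := by
    have cA : Continuous fun p : ℝ × ℝ => f p.1 p.2 * w p.2 * Real.log (h p.2) := (hfc'.mul hw2).mul hh2
    have i1 : ∫ x in (-L)..L, (∫ y in (-L)..L, f x y * w y * Real.log (h y)) * w x ≤
        ∫ x in (-L)..L, (∫ y in (-L)..L, fy x y ^ 2 / (4 * f x y) * w y) * w x := by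
      refine intervalIntegral.integral_mono hLL.le ?_ ?_ ?_
      · exact ((parX (fun x y => f x y * w y * Real.log (h y)) cA).mul hwc).intervalIntegrable _ _
      · exact ((parX (fun x y => fy x y ^ 2 / (4 * f x y) * w y) (cY.mul hw2)).mul hwc).intervalIntegrable _ _
      · intro x
        exact mul_le_mul_of_nonneg_right (step3 x) (hwpos x).le
    have i2 : ∫ x in (-L)..L, (∫ y in (-L)..L, f x y * w y * Real.log (h y)) * w x
        = ∫ y in (-L)..L, F1 y * Real.log (h y) * w y := by
      simp_rw [← intervalIntegral.integral_mul_const]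
      rw [swap_cont L (fun x y => f x y * w y * Real.log (h y) * w x) (cA.mul hw1)]
      refine intervalIntegral.integral_congr fun y _ => ?_
      simp only [hF1]
      rw [← intervalIntegral.integral_mul_const, ← intervalIntegral.integral_mul_const]
      refine intervalIntegral.integral_congr fun x _ => ?_
      ring
    have i3 : ∫ x in (-L)..L, (∫ y in (-L)..L, fy x y ^ 2 / (4 * f x y) * w y) * w x
        = ∫ y in (-L)..L, ∫ x in (-L)..L, fy x y ^ 2 / (4 * f x y) * (w x * w y) := by
      simp_rw [← intervalIntegral.integral_mul_const]
      have cz : Continuous fun p : ℝ×ℝ => fy p.1 p.2^2/(4*f p.1 p.2)*w p.2*w p.1 := (cY.mul hw2).mul hw1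
      rw [swap_cont L (fun x y => fy x y ^ 2 / (4 * f x y) * w y * w x) cz]
      refine intervalIntegral.integral_congr fun y _ => ?_
      refine intervalIntegral.integral_congr fun x _ => ?_
      ring
    rw [← i2, ← i3]; exact i1
  -- step 5
  have step5 : (∫ y in (-L)..L, ∫ x in (-L)..L, f x y * Real.log (f x y) * (w x * w y))
      - ((∫ y in (-L)..L, F1 y * Real.log (h y) * w y) + m * Real.log (m / Z ^ 2))
      ≤ ∫ y in (-L)..L, ∫ x in (-L)..L, fx x y ^ 2 / (4 * f x y) * (w x * w y) := by
    have cA : Continuous fun p : ℝ × ℝ => f p.1 p.2 * Real.log (f p.1 p.2) * (w p.1 * w p.2) :=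
      (hfc'.mul hlogc).mul (hw1.mul hw2)
    have cB : Continuous fun y => F1 y * Real.log (h y) * w y := (hF1c.mul hhlog).mul hwc
    have cC : Continuous fun y => F1 y * w y * Real.log (m / Z ^ 2) := (hF1c.mul hwc).mul continuous_const
    have cD := parY (fun x y => f x y*Real.log (f x y)*(w x*w y)) cA
    have e1 : (∫ y in (-L)..L, F1 y * Real.log (h y) * w y) + m * Real.log (m / Z ^ 2)
        = ∫ y in (-L)..L, (F1 y * Real.log (h y) * w y + F1 y * w y * Real.log (m / Z ^ 2)) := by
      rw [intervalIntegral.integral_add (cB.intervalIntegrable _ _) (cC.intervalIntegrable _ _),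
        intervalIntegral.integral_mul_const, hmF1]
    have cE : Continuous fun y => (F1 y * Real.log (h y) * w y + F1 y * w y * Real.log (m / Z ^ 2)) := cB.add cC
    rw [e1, ← intervalIntegral.integral_sub (cD.intervalIntegrable _ _)
      (cE.intervalIntegrable _ _)]
    refine intervalIntegral.integral_mono hLL.le
      ((cD.sub (cB.add cC)).intervalIntegrable _ _)
      ((parY (fun x y => fx x y ^ 2 / (4 * f x y) * (w x * w y)) (cX.mul (hw1.mul hw2))).intervalIntegrable _ _) ?_
    intro y
    have h1 := mul_le_mul_of_nonneg_right (step1 y) (hwpos y).le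
    have hlog : Real.log (F1 y / Z) = Real.log (h y) + Real.log (m / Z ^ 2) := by
      rw [← Real.log_mul (hhpos y).ne' (by positivity)]
      congr 1
      simp only [hh]; field_simp
    have q1 : (∫ x in (-L)..L, f x y * Real.log (f x y) * w x) * w y
        = ∫ x in (-L)..L, f x y * Real.log (f x y) * w x * w y :=
      (intervalIntegral.integral_mul_const _ _).symm
    have q2 : (∫ x in (-L)..L, fx x y ^ 2 / (4 * f x y) * w x) * w y
        = ∫ x in (-L)..L, fx x y ^ 2 / (4 * f x y) * w x * w y :=
      (intervalIntegral.integral_mul_const _ _).symm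
    rw [sub_mul, q1, q2, hlog] at h1
    simp only [mul_assoc] at h1 ⊢
    linarith
  have cXw : Continuous fun p : ℝ × ℝ => fx p.1 p.2 ^ 2 / (4 * f p.1 p.2) * (w p.1 * w p.2) := cX.mul (hw1.mul hw2)
  have cYw : Continuous fun p : ℝ × ℝ => fy p.1 p.2 ^ 2 / (4 * f p.1 p.2) * (w p.1 * w p.2) := cY.mul (hw1.mul hw2)
  have fin : (∫ y in (-L)..L, ∫ x in (-L)..L, (fx x y ^ 2 + fy x y ^ 2) / (4 * f x y) * (w x * w y))
      = (∫ y in (-L)..L, ∫ x in (-L)..L, fx x y ^ 2 / (4 * f x y) * (w x * w y))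
        + ∫ y in (-L)..L, ∫ x in (-L)..L, fy x y ^ 2 / (4 * f x y) * (w x * w y) := by
    rw [← intervalIntegral.integral_add
      ((parY (fun x y => fx x y ^ 2 / (4 * f x y) * (w x * w y)) cXw).intervalIntegrable _ _)
      ((parY (fun x y => fy x y ^ 2 / (4 * f x y) * (w x * w y)) cYw).intervalIntegrable _ _)]
    refine intervalIntegral.integral_congr fun y _ => ?_
    rw [← intervalIntegral.integral_add
      ((secX (fun x y => fx x y ^ 2 / (4 * f x y) * (w x * w y)) cXw y).intervalIntegrable _ _)
      ((secX (fun x y => fy x y ^ 2 / (4 * f x y) * (w x * w y)) cYw y).intervalIntegrable _ _)]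
    refine intervalIntegral.integral_congr fun x _ => ?_
    ring
  rw [fin]
  linarith


def sqC (L : ℝ) : Set ℂ := {z | z.re ∈ Set.Ioc (-L) L ∧ z.im ∈ Set.Ioc (-L) L}

lemma sq_integral (L : ℝ) (hL : 0 < L) (g : ℂ → ℝ) (hg : Continuous g) :
    ∫ z in sqC L, g z = ∫ y in (-L)..L, ∫ x in (-L)..L, g ⟨x, y⟩ := by
  have hc : Continuous fun p : ℝ × ℝ => g ⟨p.1, p.2⟩ :=
    hg.comp (Complex.equivRealProdCLM.symm.continuous)
  rw [← swap_cont L (fun x y => g ⟨x, y⟩) hc]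
  have hLL : -L ≤ L := by linarith
  rw [intervalIntegral.integral_of_le hLL]
  simp_rw [intervalIntegral.integral_of_le hLL]
  rw [← setIntegral_prod (fun p : ℝ × ℝ => g ⟨p.1, p.2⟩)]
  · rw [← Measure.volume_eq_prod]
    rw [← Complex.volume_preserving_equiv_real_prod.setIntegral_preimage_emb
      Complex.measurableEquivRealProd.measurableEmbedding]
    rfl
  · have : IntegrableOn (fun p : ℝ × ℝ => g ⟨p.1, p.2⟩) (Set.Icc (-L) L ×ˢ Set.Icc (-L) L) :=
      hc.continuousOn.integrableOn_compact (isCompact_Icc.prod isCompact_Icc)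
    exact this.mono_set (Set.prod_mono Set.Ioc_subset_Icc_self Set.Ioc_subset_Icc_self)

lemma sq_cover : AECover (volume : Measure ℂ) Filter.atTop sqC := by
  constructor
  · refine Filter.Eventually.of_forall fun z => ?_
    have h1 := (Filter.eventually_gt_atTop (|z.re|)).and (Filter.eventually_gt_atTop (|z.im|))
    filter_upwards [h1] with L hL
    have := abs_lt.mp hL.1
    have := abs_lt.mp hL.2
    simp only [sqC, Set.mem_ofPred_eq, Set.mem_Ioc]
    refine ⟨⟨?_, ?_⟩, ?_, ?_⟩ <;> linarith
  · intro L
    exact (Complex.measurable_re measurableSet_Ioc).inter (Complex.measurable_im measurableSet_Ioc)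

lemma sq_tendsto (g : ℂ → ℝ) (hg : Integrable g) :
    Filter.Tendsto (fun L => ∫ z in sqC L, g z) Filter.atTop (nhds (∫ z, g z)) :=
  sq_cover.integral_tendsto_of_countably_generated hg

lemma gauss_tendsto : Filter.Tendsto (fun L : ℝ => ∫ x in (-L)..L, Real.exp (-x ^ 2)) Filter.atTop
    (nhds (Real.sqrt Real.pi)) := by
  have h1 : ∫ x : ℝ, Real.exp (-x ^ 2) = Real.sqrt Real.pi := by
    have := integral_gaussian 1
    simpa using this
  have h2 : Integrable fun x : ℝ => Real.exp (-x ^ 2) := by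
    have := integrable_exp_neg_mul_sq (b := 1) one_pos
    simpa using this
  rw [← h1]
  exact intervalIntegral_tendsto_integral h2 Filter.tendsto_neg_atTop_atBot Filter.tendsto_id

lemma expn (x y : ℝ) : Real.exp (-‖(⟨x, y⟩ : ℂ)‖ ^ 2) = Real.exp (-x ^ 2) * Real.exp (-y ^ 2) := by
  rw [← Real.exp_add, Complex.sq_norm, Complex.normSq_mk]; ring_nf

/-- log-Sobolev inequality on the plane. -/
lemma lsiC (f D : ℂ → ℝ) (hf : ContDiff ℝ 1 f) (hpos : ∀ z, 0 < f z)
    (hD : ∀ z, ((fderiv ℝ f z 1) ^ 2 + (fderiv ℝ f z Complex.I) ^ 2) / (4 * f z) ≤ D z)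
    (i1 : Integrable fun z => f z * Real.exp (-‖z‖ ^ 2))
    (i2 : Integrable fun z => f z * Real.log (f z) * Real.exp (-‖z‖ ^ 2))
    (i3 : Integrable fun z => D z * Real.exp (-‖z‖ ^ 2)) :
    (∫ z, f z * Real.log (f z) * Real.exp (-‖z‖ ^ 2))
      - (∫ z, f z * Real.exp (-‖z‖ ^ 2)) * Real.log ((∫ z, f z * Real.exp (-‖z‖ ^ 2)) / Real.pi)
      ≤ ∫ z, D z * Real.exp (-‖z‖ ^ 2) := by
  have hfc : Continuous f := hf.continuous
  have hfd : Continuous (fderiv ℝ f) := hf.continuous_fderiv one_ne_zero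
  have hxc : Continuous fun z => fderiv ℝ f z 1 := hfd.clm_apply continuous_const
  have hyc : Continuous fun z => fderiv ℝ f z Complex.I := hfd.clm_apply continuous_const
  have hlog : Continuous fun z => Real.log (f z) := hfc.log fun z => (hpos z).ne'
  have hexp : Continuous fun z : ℂ => Real.exp (-‖z‖ ^ 2) := by fun_prop
  set q : ℂ → ℝ := fun z => ((fderiv ℝ f z 1) ^ 2 + (fderiv ℝ f z Complex.I) ^ 2) / (4 * f z) with hq
  have hqc : Continuous q := ((hxc.pow 2).add (hyc.pow 2)).div (continuous_const.mul hfc)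
    (fun z => mul_ne_zero (by norm_num) (hpos z).ne')
  have hq0 : ∀ z, 0 ≤ q z := fun z => div_nonneg (by positivity) (by have := hpos z; positivity)
  have c1 : Continuous fun z => f z * Real.exp (-‖z‖ ^ 2) := hfc.mul hexp
  have c2 : Continuous fun z => f z * Real.log (f z) * Real.exp (-‖z‖ ^ 2) := (hfc.mul hlog).mul hexp
  have c3 : Continuous fun z => q z * Real.exp (-‖z‖ ^ 2) := hqc.mul hexp
  have i4 : Integrable fun z => q z * Real.exp (-‖z‖ ^ 2) := by
    refine i3.mono' c3.aestronglyMeasurable (Filter.Eventually.of_forall fun z => ?_)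
    rw [Real.norm_of_nonneg (mul_nonneg (hq0 z) (Real.exp_pos _).le)]
    exact mul_le_mul_of_nonneg_right (hD z) (Real.exp_pos _).le
  have hle : ∫ z, q z * Real.exp (-‖z‖ ^ 2) ≤ ∫ z, D z * Real.exp (-‖z‖ ^ 2) :=
    integral_mono i4 i3 fun z => mul_le_mul_of_nonneg_right (hD z) (Real.exp_pos _).le
  refine le_trans ?_ hle
  have mpos : 0 < ∫ z, f z * Real.exp (-‖z‖ ^ 2) := by
    rw [integral_pos_iff_support_of_nonneg (fun z => (mul_pos (hpos z) (Real.exp_pos _)).le) i1]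
    have : Function.support (fun z => f z * Real.exp (-‖z‖ ^ 2)) = Set.univ := by
      ext z; simp [(hpos z).ne']
    rw [this]; simp
  have t1 := sq_tendsto _ i1
  have t2 := sq_tendsto _ i2
  have t3 := sq_tendsto _ i4
  have tZ := gauss_tendsto.pow 2
  rw [Real.sq_sqrt Real.pi_pos.le] at tZ
  have t5 := (t1.div tZ Real.pi_pos.ne').log (div_pos mpos Real.pi_pos).ne'
  refine le_of_tendsto_of_tendsto (t2.sub (t1.mul t5)) t3 ?_
  filter_upwards [Filter.eventually_gt_atTop 0] with L hL
  simp only [Pi.div_apply, Pi.pow_apply]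
  rw [sq_integral L hL _ c1, sq_integral L hL _ c2, sq_integral L hL _ c3]
  simp only [expn]
  have hmk : Continuous fun p : ℝ × ℝ => (⟨p.1, p.2⟩ : ℂ) := Complex.equivRealProdCLM.symm.continuous
  have dx : ∀ x y : ℝ, HasDerivAt (fun t : ℝ => (⟨t, y⟩ : ℂ)) 1 x := by
    intro x y
    have h := (Complex.ofRealCLM.hasDerivAt (x := x)).add_const (y * Complex.I)
    simp only [Complex.ofRealCLM_apply, Complex.ofReal_one] at h
    have e : (fun t : ℝ => (⟨t, y⟩ : ℂ)) = fun t : ℝ => (t : ℂ) + y * Complex.I := by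
      funext t; apply Complex.ext <;> simp
    rw [e]; exact h
  have dy : ∀ x y : ℝ, HasDerivAt (fun t : ℝ => (⟨x, t⟩ : ℂ)) Complex.I y := by
    intro x y
    have h := ((Complex.ofRealCLM.hasDerivAt (x := y)).mul_const Complex.I).const_add (x : ℂ)
    simp only [Complex.ofRealCLM_apply, Complex.ofReal_one, one_mul] at h
    have e : (fun t : ℝ => (⟨x, t⟩ : ℂ)) = fun t : ℝ => (x : ℂ) + t * Complex.I := by
      funext t; apply Complex.ext <;> simp
    rw [e]; exact h
  have hdf : ∀ z, HasFDerivAt f (fderiv ℝ f z) z := fun z =>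
    (hf.differentiable one_ne_zero z).hasFDerivAt
  exact lsi2 L hL (fun x y => f ⟨x, y⟩) (fun x y => fderiv ℝ f ⟨x, y⟩ 1)
    (fun x y => fderiv ℝ f ⟨x, y⟩ Complex.I) (hfc.comp hmk)
    (fun x y => (hdf ⟨x, y⟩).comp_hasDerivAt x (dx x y))
    (fun x y => (hdf ⟨x, y⟩).comp_hasDerivAt y (dy x y))
    (hxc.comp hmk) (hyc.comp hmk) (fun x y => hpos _)


lemma polar_symm_eq (r θ : ℝ) : Complex.polarCoord.symm (r, θ) = circleMap 0 r θ := by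
  simp only [Complex.polarCoord_symm_apply, circleMap, zero_add, Complex.exp_mul_I,
    Complex.ofReal_cos, Complex.ofReal_sin]

lemma circ_int {E : Type*} [NormedAddCommGroup E] [NormedSpace ℝ E] (g : ℂ → E) (r : ℝ) :
    ∫ θ in Set.Ioo (-Real.pi) Real.pi, g (circleMap 0 r θ) = (2 * Real.pi) • Real.circleAverage g 0 r := by
  rw [Real.circleAverage, smul_smul, mul_inv_cancel₀ Real.two_pi_pos.ne', one_smul,
    ← integral_Ioc_eq_integral_Ioo, ← intervalIntegral.integral_of_le (by linarith [Real.pi_pos])]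
  have hp : Function.Periodic (fun θ => g (circleMap 0 r θ)) (2 * Real.pi) := by
    intro θ; simp only [periodic_circleMap 0 r θ]
  have := hp.intervalIntegral_add_eq (-Real.pi) 0
  rw [zero_add] at this
  rw [← this]; congr 1; ring

lemma polar_int {E : Type*} [NormedAddCommGroup E] [NormedSpace ℝ E] (g : ℂ → E)
    (hg : Integrable g) (hm : Continuous g) :
    ∫ z, g z = ∫ r in Set.Ioi (0:ℝ), (2 * Real.pi * r) • Real.circleAverage g 0 r := by
  rw [← Complex.integral_comp_polarCoord_symm]
  have e : polarCoord.target = Set.Ioi (0:ℝ) ×ˢ Set.Ioo (-Real.pi) Real.pi := rfl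
  have e2 : Continuous fun p : ℝ × ℝ => p.1 • g (Complex.polarCoord.symm p) := by
    simp only [Complex.polarCoord_symm_apply]
    fun_prop
  rw [e, Measure.volume_eq_prod, setIntegral_prod]
  · refine setIntegral_congr_fun measurableSet_Ioi fun r hr => ?_
    simp only [polar_symm_eq]
    rw [integral_smul, circ_int, smul_smul]; congr 1; ring
  · constructor
    · exact e2.aestronglyMeasurable
    · rw [← Measure.volume_eq_prod, ← e]
      have h := hg.2
      rw [hasFiniteIntegral_iff_enorm] at h ⊢
      rw [← Complex.lintegral_comp_polarCoord_symm] at h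
      refine lt_of_eq_of_lt ?_ h
      refine setLIntegral_congr_fun (by rw [e]; exact measurableSet_Ioi.prod measurableSet_Ioo) ?_
      intro p hp
      rw [e] at hp
      have hp1 : 0 < p.1 := hp.1
      simp only [enorm_smul, smul_eq_mul]
      congr 1
      rw [Real.enorm_eq_ofReal hp1.le]

lemma circ_cont {E : Type*} [NormedAddCommGroup E] [NormedSpace ℝ E] (g : ℂ → E)
    (hg : Continuous g) : Continuous fun r => Real.circleAverage g 0 r := by
  unfold Real.circleAverage
  refine Continuous.const_smul ?_ _
  apply intervalIntegral.continuous_parametric_intervalIntegral_of_continuous'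
    (f := fun r θ => g (circleMap 0 r θ))
  simp only [Function.uncurry_def, circleMap]
  fun_prop

lemma circ_nonneg (g : ℂ → ℝ) (h0 : ∀ z, 0 ≤ g z) (r : ℝ) : 0 ≤ Real.circleAverage g 0 r := by
  unfold Real.circleAverage
  refine smul_nonneg (by positivity) (intervalIntegral.integral_nonneg (by positivity) fun θ _ => h0 _)

lemma polar_lint (g : ℂ → ℝ) (hc : Continuous g) (h0 : ∀ z, 0 ≤ g z) :
    ∫⁻ z, ENNReal.ofReal (g z) = ∫⁻ r in Set.Ioi (0:ℝ), ENNReal.ofReal (2 * Real.pi * r * Real.circleAverage g 0 r) := by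
  rw [← Complex.lintegral_comp_polarCoord_symm]
  have e : polarCoord.target = Set.Ioi (0:ℝ) ×ˢ Set.Ioo (-Real.pi) Real.pi := rfl
  have e2 : Continuous fun p : ℝ × ℝ => g (Complex.polarCoord.symm p) := by
    simp only [Complex.polarCoord_symm_apply]
    fun_prop
  rw [e, Measure.volume_eq_prod, ← Measure.prod_restrict, lintegral_prod]
  · refine setLIntegral_congr_fun measurableSet_Ioi fun r hr => ?_
    have hr' : (0:ℝ) < r := hr
    simp only [polar_symm_eq, smul_eq_mul]
    have hcc : Continuous fun θ => g (circleMap 0 r θ) := by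
      simp only [circleMap]; fun_prop
    rw [lintegral_const_mul _ (hcc.measurable.ennreal_ofReal)]
    rw [← ofReal_integral_eq_lintegral_ofReal _ (Filter.Eventually.of_forall fun θ => h0 _), circ_int, ← ENNReal.ofReal_mul hr'.le]
    · congr 1; simp only [smul_eq_mul]; ring
    · exact (hcc.continuousOn.integrableOn_compact isCompact_Icc).mono_set Set.Ioo_subset_Icc_self
  · exact (Measurable.mul (measurable_fst.ennreal_ofReal) (e2.measurable.ennreal_ofReal)).aemeasurable

noncomputable def coef (F : ℂ → ℂ) (k : ℕ) : ℂ := iteratedDeriv k F 0 / (k.factorial : ℂ)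

lemma coef_hasSum (F : ℂ → ℂ) (hF : Differentiable ℂ F) (z : ℂ) :
    HasSum (fun k => coef F k * z ^ k) (F z) := by
  have := Complex.hasSum_taylorSeries_of_entire hF 0 z
  simp only [sub_zero, smul_eq_mul] at this
  have e : (fun k => coef F k * z ^ k) = fun n : ℕ => ((n.factorial : ℂ))⁻¹ * (z ^ n * iteratedDeriv n F 0) := by
    funext k
    simp only [coef]; ring
  rw [e]; exact this

lemma coef_summable (F : ℂ → ℂ) (hF : Differentiable ℂ F) (r : ℝ) (hr : 0 ≤ r) :
    Summable (fun k => ‖coef F k‖ * r ^ k) := by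
  have := (coef_hasSum F hF (r : ℂ)).summable.norm
  simpa [abs_of_nonneg hr] using this

lemma coef_deriv (F : ℂ → ℂ) (k : ℕ) : coef (deriv F) k = (k + 1) * coef F (k + 1) := by
  simp only [coef, iteratedDeriv_succ', Nat.factorial_succ]
  have : (k.factorial : ℂ) ≠ 0 := by exact_mod_cast k.factorial_ne_zero
  have : (k + 1 : ℂ) ≠ 0 := by exact_mod_cast k.succ_ne_zero
  push_cast
  field_simp

open Polynomial in
lemma parseval_poly (a : ℕ → ℂ) (r : ℝ) (n : ℕ) :
    Real.circleAverage (fun z => ‖∑ k ∈ Finset.range n, a k * z ^ k‖ ^ 2) 0 r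
      = ∑ k ∈ Finset.range n, ‖a k‖ ^ 2 * r ^ (2 * k) := by
  set p : ℂ[X] := ∑ k ∈ Finset.range n, Polynomial.monomial k (a k * (r : ℂ) ^ k) with hp
  have hcoef : ∀ k, p.coeff k = if k < n then a k * (r : ℂ) ^ k else 0 := by
    intro k
    simp [hp, Polynomial.finsetSum_coeff, Polynomial.coeff_monomial]
  have h := p.sum_sq_norm_coeff_eq_circleAverage
  have h1 : ∑ i ∈ p.support, ‖p.coeff i‖ ^ 2 = ∑ k ∈ Finset.range n, ‖a k‖ ^ 2 * r ^ (2 * k) := by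
    rw [Finset.sum_subset (s₂ := Finset.range n)]
    · refine Finset.sum_congr rfl fun k hk => ?_
      rw [hcoef, if_pos (Finset.mem_range.mp hk), norm_mul, norm_pow, Complex.norm_real, mul_pow,
        Real.norm_eq_abs, ← pow_mul, mul_comm k 2, pow_mul, sq_abs, pow_mul]
    · intro k hk
      rw [Finset.mem_range]
      by_contra hh
      rw [Polynomial.mem_support_iff, hcoef, if_neg hh] at hk
      exact hk rfl
    · intro k _ hk
      simp [Polynomial.notMem_support_iff.mp hk]
  rw [← h1, h]
  unfold Real.circleAverage
  congr 1
  refine intervalIntegral.integral_congr fun θ _ => ?_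
  simp only [circleMap, hp, Polynomial.eval_finsetSum, Polynomial.eval_monomial]
  congr 2
  refine Finset.sum_congr rfl fun k _ => ?_
  push_cast
  ring

lemma parseval (F : ℂ → ℂ) (hF : Differentiable ℂ F) (r : ℝ) (hr : 0 ≤ r) :
    HasSum (fun k => ‖coef F k‖ ^ 2 * r ^ (2 * k)) (Real.circleAverage (fun z => ‖F z‖ ^ 2) 0 r) := by
  rw [hasSum_iff_tendsto_nat_of_nonneg (fun k => by positivity)]
  simp only [← parseval_poly]
  unfold Real.circleAverage
  refine Filter.Tendsto.const_smul ?_ _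
  have hs := coef_summable F hF r hr
  set M := ∑' k, ‖coef F k‖ * r ^ k with hM
  refine intervalIntegral.tendsto_integral_filter_of_dominated_convergence (fun _ => M ^ 2) ?_ ?_ ?_ ?_
  · refine Filter.Eventually.of_forall fun n => ?_
    refine Continuous.aestronglyMeasurable ?_
    simp only [circleMap]; fun_prop
  · refine Filter.Eventually.of_forall fun n => Filter.Eventually.of_forall fun θ _ => ?_
    rw [Real.norm_of_nonneg (by positivity)]
    have : ‖∑ k ∈ Finset.range n, coef F k * circleMap 0 r θ ^ k‖ ≤ M := by
      refine (norm_sum_le _ _).trans ?_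
      simp only [norm_mul, norm_pow, norm_circleMap_zero, abs_of_nonneg hr]
      exact hs.sum_le_tsum _ (fun k _ => by positivity)
    exact pow_le_pow_left₀ (norm_nonneg _) this 2
  · simp
  · refine Filter.Eventually.of_forall fun θ _ => ?_
    exact ((coef_hasSum F hF (circleMap 0 r θ)).tendsto_sum_nat.norm).pow 2


lemma mom (k : ℕ) : IntegrableOn (fun r : ℝ => 2 * Real.pi * r * (r ^ (2 * k) * Real.exp (-r ^ 2))) (Set.Ioi 0) ∧
    ∫ r in Set.Ioi (0:ℝ), 2 * Real.pi * r * (r ^ (2 * k) * Real.exp (-r ^ 2)) = Real.pi * k.factorial := by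
  have hq : (-1 : ℝ) < 2 * k + 1 := by linarith [(k.cast_nonneg : (0:ℝ) ≤ k)]
  have e : ∀ r ∈ Set.Ioi (0:ℝ), 2 * Real.pi * r * (r ^ (2 * k) * Real.exp (-r ^ 2))
      = (2 * Real.pi) * (r ^ ((2 * k + 1 : ℝ)) * Real.exp (- r ^ (2:ℝ))) := by
    intro r hr
    have e1 : r ^ ((2 * k + 1 : ℝ)) = r ^ (2 * k + 1) := by
      rw [← Real.rpow_natCast]; push_cast; rfl
    have e2 : r ^ (2:ℝ) = r ^ 2 := by rw [← Real.rpow_natCast]; norm_num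
    rw [e1, e2, pow_succ]; ring
  constructor
  · rw [integrableOn_congr_fun e measurableSet_Ioi]
    exact (integrableOn_rpow_mul_exp_neg_rpow hq (by norm_num)).const_mul _
  · rw [setIntegral_congr_fun measurableSet_Ioi e, integral_const_mul,
      integral_rpow_mul_exp_neg_rpow (by norm_num) hq]
    have : ((2 * k + 1 + 1 : ℝ)) / 2 = k + 1 := by ring
    rw [this, Real.Gamma_nat_eq_factorial]; ring

lemma mom_l (k : ℕ) : ∫⁻ r in Set.Ioi (0:ℝ), ENNReal.ofReal (2 * Real.pi * r * (r ^ (2 * k) * Real.exp (-r ^ 2)))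
    = ENNReal.ofReal (Real.pi * k.factorial) := by
  rw [← (mom k).2, ofReal_integral_eq_lintegral_ofReal (mom k).1]
  filter_upwards [ae_restrict_mem measurableSet_Ioi] with r hr
  have : (0:ℝ) < r := hr
  have := Real.pi_pos
  simp only [Pi.zero_apply]
  positivity

lemma circ_radial (g : ℂ → ℝ) (W : ℝ → ℝ) (r : ℝ) (hr : 0 ≤ r) :
    Real.circleAverage (fun z => g z * W ‖z‖) 0 r = Real.circleAverage g 0 r * W r := by
  unfold Real.circleAverage
  rw [smul_mul_assoc, ← intervalIntegral.integral_mul_const]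
  simp only [norm_circleMap_zero, abs_of_nonneg hr]

lemma fock_lint (F : ℂ → ℂ) (hF : Differentiable ℂ F) (m : ℕ) :
    ∫⁻ z, ENNReal.ofReal (‖F z‖ ^ 2 * (‖z‖ ^ (2 * m) * Real.exp (-‖z‖ ^ 2)))
      = ∑' k, ENNReal.ofReal (‖coef F k‖ ^ 2 * (Real.pi * (k + m).factorial)) := by
  have hFc := hF.continuous
  rw [polar_lint _ (by fun_prop) (fun z => by positivity)]
  have e : ∀ r ∈ Set.Ioi (0:ℝ), ENNReal.ofReal (2 * Real.pi * r *
      Real.circleAverage (fun z => ‖F z‖ ^ 2 * (‖z‖ ^ (2 * m) * Real.exp (-‖z‖ ^ 2))) 0 r)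
      = ∑' k, ENNReal.ofReal (‖coef F k‖ ^ 2) * ENNReal.ofReal (2 * Real.pi * r * (r ^ (2 * (k + m)) * Real.exp (-r ^ 2))) := by
    intro r hr
    have hr : (0:ℝ) < r := hr
    have hpi := Real.pi_pos
    rw [circ_radial (fun z => ‖F z‖ ^ 2) (fun r => r ^ (2 * m) * Real.exp (-r ^ 2)) r hr.le]
    have h1 := ((parseval F hF r hr.le).mul_right (r ^ (2 * m) * Real.exp (-r ^ 2))).mul_left (2 * Real.pi * r)
    rw [← h1.tsum_eq, ENNReal.ofReal_tsum_of_nonneg (fun k => by positivity) h1.summable]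
    refine tsum_congr fun k => ?_
    rw [← ENNReal.ofReal_mul (by positivity)]
    congr 1; ring
  rw [setLIntegral_congr_fun measurableSet_Ioi e, lintegral_tsum]
  · refine tsum_congr fun k => ?_
    rw [lintegral_const_mul _ (by fun_prop), mom_l, ← ENNReal.ofReal_mul (by positivity)]
  · intro k
    exact Measurable.aemeasurable (by fun_prop)

lemma fock_deriv_l (F : ℂ → ℂ) (hF : Differentiable ℂ F) :
    ∫⁻ z, ENNReal.ofReal (‖F z‖ ^ 2 * (‖z‖ ^ 2 * Real.exp (-‖z‖ ^ 2)))
     = (∫⁻ z, ENNReal.ofReal (‖deriv F z‖ ^ 2 * Real.exp (-‖z‖ ^ 2)))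
      + ∫⁻ z, ENNReal.ofReal (‖F z‖ ^ 2 * Real.exp (-‖z‖ ^ 2)) := by
  have hF' : Differentiable ℂ (deriv F) := (hF.contDiff (n := 2)).differentiable_deriv_two
  have h0 := fock_lint F hF 0
  have h1 := fock_lint F hF 1
  have h2 := fock_lint (deriv F) hF' 0
  simp only [mul_zero, pow_zero, one_mul, mul_one, add_zero] at h0 h1 h2
  rw [h0, h1, h2]
  have e : ∑' k, ENNReal.ofReal (‖coef (deriv F) k‖ ^ 2 * (Real.pi * k.factorial))
      = ∑' k, ENNReal.ofReal (‖coef F k‖ ^ 2 * (Real.pi * (k * k.factorial))) := by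
    rw [tsum_eq_zero_add' (f := fun k : ℕ => ENNReal.ofReal (‖coef F k‖ ^ 2 * (Real.pi * (k * k.factorial)))) ENNReal.summable]
    simp only [Nat.cast_zero, zero_mul, mul_zero, ENNReal.ofReal_zero, zero_add]
    refine tsum_congr fun k => ?_
    rw [coef_deriv, norm_mul]
    have : ‖(k + 1 : ℂ)‖ = k + 1 := by
      have := Complex.norm_natCast (k + 1); push_cast at this; exact this
    rw [this, Nat.factorial_succ]; congr 1; push_cast; ring
  rw [e, ← ENNReal.tsum_add]
  refine tsum_congr fun k => ?_
  have hpi := Real.pi_pos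
  rw [← ENNReal.ofReal_add (by positivity) (by positivity), Nat.factorial_succ]
  congr 1; push_cast; ring

lemma int_iff (g : ℂ → ℝ) (hc : Continuous g) (h0 : ∀ z, 0 ≤ g z) :
    Integrable g ↔ ∫⁻ z, ENNReal.ofReal (g z) < ⊤ := by
  rw [Integrable, hasFiniteIntegral_iff_ofReal (Filter.Eventually.of_forall h0)]
  exact ⟨fun h => h.2, fun h => ⟨hc.aestronglyMeasurable, h⟩⟩

lemma int_eq (g : ℂ → ℝ) (hc : Continuous g) (h0 : ∀ z, 0 ≤ g z) :
    ∫ z, g z = (∫⁻ z, ENNReal.ofReal (g z)).toReal :=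
  integral_eq_lintegral_of_nonneg_ae (Filter.Eventually.of_forall h0) hc.aestronglyMeasurable

/-- commutation identity -/
lemma fock_deriv (F : ℂ → ℂ) (hF : Differentiable ℂ F)
    (i0 : Integrable fun z : ℂ => ‖F z‖ ^ 2 * Real.exp (-‖z‖ ^ 2)) :
    ((Integrable fun z : ℂ => ‖F z‖ ^ 2 * (‖z‖ ^ 2 * Real.exp (-‖z‖ ^ 2))) ↔
      Integrable fun z : ℂ => ‖deriv F z‖ ^ 2 * Real.exp (-‖z‖ ^ 2)) ∧
    ((Integrable fun z : ℂ => ‖deriv F z‖ ^ 2 * Real.exp (-‖z‖ ^ 2)) →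
      ∫ z : ℂ, ‖F z‖ ^ 2 * (‖z‖ ^ 2 * Real.exp (-‖z‖ ^ 2)) =
      (∫ z : ℂ, ‖deriv F z‖ ^ 2 * Real.exp (-‖z‖ ^ 2)) + ∫ z : ℂ, ‖F z‖ ^ 2 * Real.exp (-‖z‖ ^ 2)) := by
  have hFc := hF.continuous
  have hF' : Differentiable ℂ (deriv F) := (hF.contDiff (n := 2)).differentiable_deriv_two
  have hF'c := hF'.continuous
  have h := fock_deriv_l F hF
  rw [int_iff _ (by fun_prop) (fun z => by positivity)] at i0
  rw [int_iff _ (by fun_prop) (fun z => by positivity), int_iff _ (by fun_prop) (fun z => by positivity), h]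
  refine ⟨by rw [ENNReal.add_lt_top]; exact ⟨fun h => h.1, fun h => ⟨h, i0⟩⟩, fun i1 => ?_⟩
  rw [int_eq _ (by fun_prop) (fun z => by positivity), int_eq _ (by fun_prop) (fun z => by positivity),
    int_eq _ (by fun_prop) (fun z => by positivity), h, ENNReal.toReal_add i1.ne i0.ne]

lemma fock_hasSum (F : ℂ → ℂ) (hF : Differentiable ℂ F)
    (i0 : Integrable fun z : ℂ => ‖F z‖ ^ 2 * Real.exp (-‖z‖ ^ 2)) (k : ℕ) :
    ‖coef F k‖ ^ 2 * (Real.pi * k.factorial) ≤ ∫ z : ℂ, ‖F z‖ ^ 2 * Real.exp (-‖z‖ ^ 2) := by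
  have hFc := hF.continuous
  have hpi := Real.pi_pos
  have h0 := fock_lint F hF 0
  simp only [mul_zero, pow_zero, one_mul, add_zero] at h0
  rw [int_iff _ (by fun_prop) (fun z => by positivity)] at i0
  rw [int_eq _ (by fun_prop) (fun z => by positivity), ← ENNReal.ofReal_le_iff_le_toReal i0.ne, h0]
  exact ENNReal.le_tsum (f := fun k : ℕ => ENNReal.ofReal (‖coef F k‖ ^ 2 * (Real.pi * k.factorial))) k

lemma coef_zero (F : ℂ → ℂ) : coef F 0 = F 0 := by simp [coef]
lemma coef_one (F : ℂ → ℂ) : coef F 1 = deriv F 0 := by simp [coef]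

lemma exp_int : (Integrable fun z : ℂ => Real.exp (-‖z‖ ^ 2)) ∧ ∫ z : ℂ, Real.exp (-‖z‖ ^ 2) = Real.pi := by
  have hpi := Real.pi_pos
  have hc : Continuous fun z : ℂ => Real.exp (-‖z‖ ^ 2) := by fun_prop
  have h0 : ∫⁻ z : ℂ, ENNReal.ofReal (Real.exp (-‖z‖ ^ 2)) = ENNReal.ofReal Real.pi := by
    have := fock_lint (fun _ => 1) (by fun_prop) 0
    simp only [norm_one, mul_zero, pow_zero, one_pow, one_mul, add_zero] at this
    rw [this, tsum_eq_single 0]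
    · simp [coef_zero]
    · intro k hk
      simp [coef, iteratedDeriv_const, hk]
  rw [int_iff _ hc (fun z => by positivity), int_eq _ hc (fun z => by positivity), h0]
  exact ⟨by simp, by simp [hpi.le]⟩

/-- radial mean value property -/
lemma mean_radial (H : ℂ → ℂ) (hH : Differentiable ℂ H) (W : ℝ → ℝ) (hW : Continuous W)
    (h0 : H 0 = 0) (hi : Integrable fun z : ℂ => (H z) * (W ‖z‖ : ℂ)) :
    ∫ z : ℂ, (H z) * (W ‖z‖ : ℂ) = 0 := by
  have hHc := hH.continuous
  rw [polar_int _ hi (by fun_prop)]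
  rw [setIntegral_congr_fun (g := fun _ => (0:ℂ)) measurableSet_Ioi]
  · simp
  intro r hr
  have hr : (0:ℝ) < r := hr
  have : Real.circleAverage (fun z : ℂ => H z * (W ‖z‖ : ℂ)) 0 r = Real.circleAverage H 0 r * (W r : ℂ) := by
    unfold Real.circleAverage
    rw [smul_mul_assoc, ← intervalIntegral.integral_mul_const]
    simp only [norm_circleMap_zero, abs_of_nonneg hr.le]
  simp only [this]
  rw [(hH.diffContOnCl).circleAverage, h0]; simp

lemma mean_radial_re (H : ℂ → ℂ) (hH : Differentiable ℂ H) (W : ℝ → ℝ) (hW : Continuous W)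
    (h0 : H 0 = 0) (hi : Integrable fun z : ℂ => (H z) * (W ‖z‖ : ℂ)) :
    ∫ z : ℂ, (H z).re * W ‖z‖ = 0 := by
  have := mean_radial H hH W hW h0 hi
  have h2 := integral_re hi
  rw [RCLike.re_eq_complex_re] at *
  simp only [RCLike.re_eq_complex_re, Complex.re_mul_ofReal] at h2
  rw [h2, this]; simp


/-- Fock translation -/
noncomputable def tr (ξ : ℂ) (F : ℂ → ℂ) (z : ℂ) : ℂ :=
  F (z + ξ) * Complex.exp (-(z * (starRingEnd ℂ) ξ) - ((‖ξ‖ ^ 2 / 2 : ℝ) : ℂ))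

lemma tr_diff (ξ : ℂ) (F : ℂ → ℂ) (hF : Differentiable ℂ F) : Differentiable ℂ (tr ξ F) := by
  unfold tr
  have : Differentiable ℂ fun z => F (z + ξ) := hF.comp (by fun_prop)
  fun_prop

lemma tr_u (ξ : ℂ) (F : ℂ → ℂ) (z : ℂ) :
    ‖tr ξ F z‖ ^ 2 * Real.exp (-‖z‖ ^ 2) = ‖F (z + ξ)‖ ^ 2 * Real.exp (-‖z + ξ‖ ^ 2) := by
  unfold tr
  rw [norm_mul, mul_pow, mul_assoc, Complex.norm_exp, ← Real.exp_nat_mul, ← Real.exp_add]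
  congr 2
  rw [Complex.sq_norm, Complex.sq_norm, Complex.sq_norm, Complex.normSq_add]
  simp only [Complex.sub_re, Complex.neg_re, Complex.ofReal_re]
  push_cast
  ring

lemma tr_zero (ξ : ℂ) (F : ℂ → ℂ) : ‖tr ξ F 0‖ ^ 2 = ‖F ξ‖ ^ 2 * Real.exp (-‖ξ‖ ^ 2) := by
  have := tr_u ξ F 0
  simpa using this

lemma tr_int (ξ : ℂ) (F : ℂ → ℂ) :
    ∫ z : ℂ, ‖tr ξ F z‖ ^ 2 * Real.exp (-‖z‖ ^ 2) = ∫ z : ℂ, ‖F z‖ ^ 2 * Real.exp (-‖z‖ ^ 2) := by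
  simp only [tr_u]
  exact integral_add_right_eq_self (fun z : ℂ => ‖F z‖ ^ 2 * Real.exp (-‖z‖ ^ 2)) ξ

lemma tr_integrable (ξ : ℂ) (F : ℂ → ℂ)
    (i0 : Integrable fun z : ℂ => ‖F z‖ ^ 2 * Real.exp (-‖z‖ ^ 2)) :
    Integrable fun z : ℂ => ‖tr ξ F z‖ ^ 2 * Real.exp (-‖z‖ ^ 2) := by
  simp only [tr_u]
  exact i0.comp_add_right ξ

lemma ptwise (F : ℂ → ℂ) (hF : Differentiable ℂ F)
    (i0 : Integrable fun z : ℂ => ‖F z‖ ^ 2 * Real.exp (-‖z‖ ^ 2)) (ξ : ℂ) :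
    ‖F ξ‖ ^ 2 * Real.exp (-‖ξ‖ ^ 2) * Real.pi ≤ ∫ z : ℂ, ‖F z‖ ^ 2 * Real.exp (-‖z‖ ^ 2) := by
  have := fock_hasSum (tr ξ F) (tr_diff ξ F hF) (tr_integrable ξ F i0) 0
  rw [tr_int, coef_zero, tr_zero] at this
  simpa using this

lemma tr_deriv_integrable (ξ : ℂ) (F : ℂ → ℂ) (hF : Differentiable ℂ F)
    (i0 : Integrable fun z : ℂ => ‖F z‖ ^ 2 * Real.exp (-‖z‖ ^ 2))
    (i1 : Integrable fun z : ℂ => ‖deriv F z‖ ^ 2 * Real.exp (-‖z‖ ^ 2)) :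
    Integrable fun z : ℂ => ‖deriv (tr ξ F) z‖ ^ 2 * Real.exp (-‖z‖ ^ 2) := by
  rw [← (fock_deriv (tr ξ F) (tr_diff ξ F hF) (tr_integrable ξ F i0)).1]
  have i2 := ((fock_deriv F hF i0).1).2 i1
  have i3 := ((i2.comp_add_right ξ).const_mul 2).add ((i0.comp_add_right ξ).const_mul (2 * ‖ξ‖ ^ 2))
  have hc := (tr_diff ξ F hF).continuous
  refine i3.mono' (by apply Continuous.aestronglyMeasurable; fun_prop) (Filter.Eventually.of_forall fun z => ?_)
  rw [Real.norm_of_nonneg (by positivity)]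
  have e : ‖tr ξ F z‖ ^ 2 * (‖z‖ ^ 2 * Real.exp (-‖z‖ ^ 2)) = ‖z‖ ^ 2 * (‖F (z + ξ)‖ ^ 2 * Real.exp (-‖z + ξ‖ ^ 2)) := by
    rw [← tr_u]; ring
  rw [e]
  have h1 : ‖z‖ ^ 2 ≤ 2 * ‖z + ξ‖ ^ 2 + 2 * ‖ξ‖ ^ 2 := by
    have : ‖z‖ ≤ ‖z + ξ‖ + ‖ξ‖ := by
      have := norm_sub_le (z + ξ) ξ; simpa using this
    nlinarith [norm_nonneg z, norm_nonneg (z + ξ), norm_nonneg ξ, sq_nonneg (‖z + ξ‖ - ‖ξ‖)]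
  have h2 : 0 ≤ ‖F (z + ξ)‖ ^ 2 * Real.exp (-‖z + ξ‖ ^ 2) := by positivity
  simp only [Pi.add_apply]
  nlinarith [mul_le_mul_of_nonneg_right h1 h2]

lemma ent (F : ℂ → ℂ) (hF : Differentiable ℂ F)
    (i0 : Integrable fun z : ℂ => ‖F z‖ ^ 2 * Real.exp (-‖z‖ ^ 2))
    (i1 : Integrable fun z : ℂ => ‖deriv F z‖ ^ 2 * Real.exp (-‖z‖ ^ 2))
    (hb : ∀ z, ‖F z‖ ^ 2 * Real.exp (-‖z‖ ^ 2) ≤ 1) :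
    (Integrable fun z : ℂ => ‖F z‖ ^ 2 * Real.log (‖F z‖ ^ 2) * Real.exp (-‖z‖ ^ 2)) ∧
    (Integrable fun z : ℂ => (‖F z‖ ^ 2 * Real.exp (-‖z‖ ^ 2)) * Real.log (‖F z‖ ^ 2 * Real.exp (-‖z‖ ^ 2))) ∧
    (∫ z : ℂ, ‖deriv F z‖ ^ 2 * Real.exp (-‖z‖ ^ 2)) - (∫ z : ℂ, ‖F z‖ ^ 2 * Real.log (‖F z‖ ^ 2) * Real.exp (-‖z‖ ^ 2))
      = - (∫ z : ℂ, (‖F z‖ ^ 2 * Real.exp (-‖z‖ ^ 2)) * Real.log (‖F z‖ ^ 2 * Real.exp (-‖z‖ ^ 2)))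
        - ∫ z : ℂ, ‖F z‖ ^ 2 * Real.exp (-‖z‖ ^ 2) := by
  have hFc := hF.continuous
  have i2 := ((fock_deriv F hF i0).1).2 i1
  have id2 := (fock_deriv F hF i0).2 i1
  have e : ∀ z, (‖F z‖ ^ 2 * Real.exp (-‖z‖ ^ 2)) * Real.log (‖F z‖ ^ 2 * Real.exp (-‖z‖ ^ 2))
      = ‖F z‖ ^ 2 * Real.log (‖F z‖ ^ 2) * Real.exp (-‖z‖ ^ 2) - ‖F z‖ ^ 2 * (‖z‖ ^ 2 * Real.exp (-‖z‖ ^ 2)) := by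
    intro z
    rcases eq_or_ne (F z) 0 with h | h
    · simp [h]
    · have : ‖F z‖ ^ 2 ≠ 0 := by simpa using h
      rw [Real.log_mul this (Real.exp_pos _).ne', Real.log_exp]; ring
  have hc : Continuous fun z => ‖F z‖ ^ 2 * Real.log (‖F z‖ ^ 2) :=
    Real.continuous_mul_log.comp (by fun_prop : Continuous fun z => ‖F z‖ ^ 2)
  have j1 : Integrable fun z : ℂ => ‖F z‖ ^ 2 * Real.log (‖F z‖ ^ 2) * Real.exp (-‖z‖ ^ 2) := by
    refine (exp_int.1.add i2).mono' (by apply Continuous.aestronglyMeasurable; fun_prop) (Filter.Eventually.of_forall fun z => ?_)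
    have h1 : -1 ≤ ‖F z‖ ^ 2 * Real.log (‖F z‖ ^ 2) := by
      rcases eq_or_ne (F z) 0 with h | h
      · simp [h]
      · have hp : 0 < ‖F z‖ ^ 2 := by positivity
        have := Real.one_sub_inv_le_log_of_pos hp
        have h3 := mul_le_mul_of_nonneg_left this hp.le
        rw [mul_sub, mul_inv_cancel₀ hp.ne'] at h3
        nlinarith
    have h2 : (‖F z‖ ^ 2 * Real.exp (-‖z‖ ^ 2)) * Real.log (‖F z‖ ^ 2 * Real.exp (-‖z‖ ^ 2)) ≤ 0 :=
      mul_nonpos_of_nonneg_of_nonpos (by positivity) (Real.log_nonpos (by positivity) (hb z))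
    rw [e z] at h2
    have hp := Real.exp_pos (-‖z‖ ^ 2)
    have h4 : 0 ≤ ‖F z‖ ^ 2 * (‖z‖ ^ 2 * Real.exp (-‖z‖ ^ 2)) := by positivity
    rw [Real.norm_eq_abs, abs_le]
    simp only [Pi.add_apply]
    constructor
    · nlinarith
    · linarith
  have j2 := j1.sub i2
  refine ⟨j1, ?_, ?_⟩
  · simp only [e]; exact j2
  · simp only [e]
    rw [integral_sub j1 i2, id2]; ring

/-- decay -/
lemma decay (F : ℂ → ℂ) (hF : Differentiable ℂ F)
    (i2 : Integrable fun z : ℂ => ‖F z‖ ^ 2 * (‖z‖ ^ 2 * Real.exp (-‖z‖ ^ 2))) (ξ : ℂ) :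
    ‖ξ‖ ^ 2 * (‖F ξ‖ ^ 2 * Real.exp (-‖ξ‖ ^ 2)) * Real.pi ≤ ∫ z : ℂ, ‖F z‖ ^ 2 * (‖z‖ ^ 2 * Real.exp (-‖z‖ ^ 2)) := by
  have e : ∀ z, ‖F z * z‖ ^ 2 * Real.exp (-‖z‖ ^ 2) = ‖F z‖ ^ 2 * (‖z‖ ^ 2 * Real.exp (-‖z‖ ^ 2)) := by
    intro z; rw [norm_mul]; ring
  have := ptwise (fun z => F z * z) (by fun_prop) (by simp only [e]; exact i2) ξ
  simp only [e] at this
  linarith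

lemma exists_max (F : ℂ → ℂ) (hF : Differentiable ℂ F)
    (i0 : Integrable fun z : ℂ => ‖F z‖ ^ 2 * Real.exp (-‖z‖ ^ 2))
    (i1 : Integrable fun z : ℂ => ‖deriv F z‖ ^ 2 * Real.exp (-‖z‖ ^ 2))
    (n1 : ∫ z : ℂ, ‖F z‖ ^ 2 * Real.exp (-‖z‖ ^ 2) = Real.pi) :
    ∃ ξ, 0 < ‖F ξ‖ ^ 2 * Real.exp (-‖ξ‖ ^ 2) ∧
      ∀ z, ‖F z‖ ^ 2 * Real.exp (-‖z‖ ^ 2) ≤ ‖F ξ‖ ^ 2 * Real.exp (-‖ξ‖ ^ 2) := by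
  have hFc := hF.continuous
  have hpi := Real.pi_pos
  have i2 := ((fock_deriv F hF i0).1).2 i1
  obtain ⟨z0, hz0⟩ : ∃ z0, 0 < ‖F z0‖ ^ 2 * Real.exp (-‖z0‖ ^ 2) := by
    by_contra hh
    push Not at hh
    have : ∀ z, ‖F z‖ ^ 2 * Real.exp (-‖z‖ ^ 2) = 0 := fun z => le_antisymm (hh z) (by positivity)
    simp only [this, integral_zero] at n1
    linarith
  have hc : Continuous fun z => ‖F z‖ ^ 2 * Real.exp (-‖z‖ ^ 2) := by fun_prop
  obtain ⟨ξ, hξ⟩ := hc.exists_forall_ge' z0 (by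
    set C := ∫ z : ℂ, ‖F z‖ ^ 2 * (‖z‖ ^ 2 * Real.exp (-‖z‖ ^ 2))
    set u0 := ‖F z0‖ ^ 2 * Real.exp (-‖z0‖ ^ 2)
    have t : Filter.Tendsto (fun z : ℂ => ‖z‖ ^ 2) (Filter.cocompact ℂ) Filter.atTop :=
      (Filter.tendsto_pow_atTop two_ne_zero).comp tendsto_norm_cocompact_atTop
    filter_upwards [t.eventually_gt_atTop (C / Real.pi / u0), t.eventually_gt_atTop 0] with z hz hz'
    have h1 := decay F hF i2 z
    rw [div_lt_iff₀ hz0, div_lt_iff₀ hpi] at hz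
    by_contra hcon
    push Not at hcon
    have := mul_lt_mul_of_pos_left hcon hz'
    have := mul_lt_mul_of_pos_right this hpi
    linarith)
  exact ⟨ξ, hz0.trans_le (hξ z0), hξ⟩

/-- distance to constants -/
lemma dist_const (G : ℂ → ℂ) (hG : Differentiable ℂ G)
    (i0 : Integrable fun z : ℂ => ‖G z‖ ^ 2 * Real.exp (-‖z‖ ^ 2))
    (n1 : ∫ z : ℂ, ‖G z‖ ^ 2 * Real.exp (-‖z‖ ^ 2) = Real.pi) (c : ℂ) (hc : ‖c‖ = 1)
    (hcG : G 0 = ‖G 0‖ * c) :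
    (Integrable fun z : ℂ => ‖G z - c‖ ^ 2 * Real.exp (-‖z‖ ^ 2)) ∧
    ∫ z : ℂ, ‖G z - c‖ ^ 2 * Real.exp (-‖z‖ ^ 2) = Real.pi * (2 - 2 * ‖G 0‖) := by
  have hGc := hG.continuous
  set H : ℂ → ℂ := fun z => (starRingEnd ℂ) c * (G z - G 0) with hH
  have hHd : Differentiable ℂ H := by simp only [hH]; fun_prop
  have hHi : Integrable fun z : ℂ => H z * ((Real.exp (-‖z‖ ^ 2) : ℝ) : ℂ) := by
    have hHc := hHd.continuous
    refine (i0.add (exp_int.1.const_mul (1 + ‖G 0‖))).mono' (by apply Continuous.aestronglyMeasurable; fun_prop)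
      (Filter.Eventually.of_forall fun z => ?_)
    rw [norm_mul, Complex.norm_real, Real.norm_of_nonneg (Real.exp_pos _).le]
    simp only [Pi.add_apply, hH]
    rw [← add_mul]
    refine mul_le_mul_of_nonneg_right ?_ (Real.exp_pos _).le
    rw [norm_mul, RCLike.norm_conj, hc, one_mul]
    have := norm_sub_le (G z) (G 0)
    nlinarith [sq_nonneg (‖G z‖ - 1)]
  have hm := mean_radial_re H hHd (fun r => Real.exp (-r ^ 2)) (by fun_prop) (by simp [hH]) hHi
  have iH : Integrable fun z : ℂ => (H z).re * Real.exp (-‖z‖ ^ 2) := by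
    have := hHi.re
    simpa only [RCLike.re_eq_complex_re, Complex.re_mul_ofReal] using this
  have e : ∀ z, ‖G z - c‖ ^ 2 * Real.exp (-‖z‖ ^ 2) = (‖G z‖ ^ 2 * Real.exp (-‖z‖ ^ 2) - 2 * ((H z).re * Real.exp (-‖z‖ ^ 2)))
      + (1 - 2 * ‖G 0‖) * Real.exp (-‖z‖ ^ 2) := by
    intro z
    have h1 : ‖G z - c‖ ^ 2 = ‖G z‖ ^ 2 + ‖c‖ ^ 2 - 2 * (G z * (starRingEnd ℂ) c).re := by
      simp only [Complex.sq_norm, Complex.normSq_sub]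
    have h2 : (H z).re = (G z * (starRingEnd ℂ) c).re - ‖G 0‖ := by
      have : (starRingEnd ℂ) c * G 0 = ‖G 0‖ := by
        rw [hcG]
        have : (starRingEnd ℂ) c * c = 1 := by
          rw [mul_comm, Complex.mul_conj, ← Complex.sq_norm, hc]; simp
        rw [mul_left_comm, this]; simp [hc]
      simp only [hH, mul_sub, this, Complex.sub_re, Complex.ofReal_re]
      rw [mul_comm]
    rw [h1, h2, hc]; ring
  have j := (i0.sub (iH.const_mul 2))
  simp only [e]
  refine ⟨j.add (exp_int.1.const_mul _), ?_⟩
  have := integral_add j (exp_int.1.const_mul (1 - 2 * ‖G 0‖))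
  simp only [Pi.sub_apply] at this
  rw [this, integral_sub i0 (iH.const_mul 2), integral_const_mul, integral_const_mul, hm, n1, exp_int.2]; ring


lemma log_bound_small (t : ℝ) (ht : |t| ≤ 1 / 10) : (1 + t) * Real.log (1 + t) - t ≤ t ^ 2 / 2 + 3 * |t| ^ 3 := by
  have h := Real.abs_log_sub_add_sum_range_le (x := -t) (by rw [abs_neg]; linarith) 2
  simp only [Finset.sum_range_succ, Finset.sum_range_zero, abs_neg, sub_neg_eq_add] at h
  have h2 : |t| ^ (2 + 1) / (1 - |t|) ≤ 2 * |t| ^ 3 := by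
    rw [div_le_iff₀ (by linarith)]
    have : 0 ≤ |t| ^ 3 := by positivity
    norm_num
    nlinarith
  have h3 := (le_abs_self _).trans (h.trans h2)
  norm_num at h3
  have h4 : Real.log (1 + t) ≤ t - t ^ 2 / 2 + 2 * |t| ^ 3 := by nlinarith
  have ht' := abs_le.mp ht
  have h5 := mul_le_mul_of_nonneg_left h4 (by linarith : 0 ≤ 1 + t)
  have h6 : -t ^ 3 ≤ |t| ^ 3 := by rw [← abs_pow]; exact neg_le_abs _
  have h7 : 0 ≤ |t| ^ 3 := by positivity
  nlinarith

lemma ptw_large (σ : ℝ) (h2 : 1 ≤ σ) :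
    (1 + σ) ^ 2 * Real.log ((1 + σ) ^ 2) ≤ σ ^ 2 * Real.log (σ ^ 2) + 12 * σ ^ 2 := by
  have hσp : 0 < σ := by linarith
  have hls : 0 ≤ Real.log σ := Real.log_nonneg h2
  have h6 : Real.log ((1 + σ) ^ 2) ≤ 2 * Real.log σ + 2 / σ := by
    rw [Real.log_pow]
    have e : 1 + σ = σ * (1 + 1 / σ) := by field_simp; ring
    rw [e, Real.log_mul hσp.ne' (by positivity)]
    have := Real.log_le_sub_one_of_pos (show 0 < 1 + 1 / σ by positivity)
    have e2 : 2 / σ = 2 * (1 / σ) := by ring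
    push_cast; rw [e2]; linarith
  have h7 := mul_le_mul_of_nonneg_left h6 (sq_nonneg (1 + σ))
  have h8 : Real.log σ ≤ σ - 1 := Real.log_le_sub_one_of_pos hσp
  have h9 : (1 + σ) ^ 2 * (2 / σ) ≤ 8 * σ ^ 2 := by
    rw [mul_div_assoc', div_le_iff₀ hσp]
    have a1 : σ ≤ σ ^ 2 := by nlinarith
    have a2 : σ ^ 2 ≤ σ ^ 3 := by nlinarith
    linarith [show (1 + σ) ^ 2 * 2 = 2 + 4 * σ + 2 * σ ^ 2 by ring, show 8 * σ ^ 2 * σ = 8 * σ ^ 3 by ring]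
  have h10 : (1 + σ) ^ 2 * (2 * Real.log σ) ≤ σ ^ 2 * (2 * Real.log σ) + 4 * σ ^ 2 := by
    have b1 := mul_le_mul_of_nonneg_left h8 (by linarith : 0 ≤ 2 + 4 * σ)
    have b2 : (2 + 4 * σ) * (σ - 1) ≤ 4 * σ ^ 2 := by nlinarith
    linarith [show (1 + σ) ^ 2 * (2 * Real.log σ) = σ ^ 2 * (2 * Real.log σ) + (2 + 4 * σ) * Real.log σ by ring]
  have hl2 : Real.log (σ ^ 2) = 2 * Real.log σ := by rw [Real.log_pow]; norm_num
  rw [hl2]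
  linarith [mul_add ((1 + σ) ^ 2) (2 * Real.log σ) (2 / σ)]

set_option maxHeartbeats 1000000 in
lemma ptw (s : ℂ) (y τ : ℝ) (hτ : 0 < τ) (hτ0 : τ ≤ Real.exp (-30)) (hs : ‖s‖ ^ 2 ≤ τ * Real.exp y) (hy : 0 ≤ y) :
    ‖1 + s‖ ^ 2 * Real.log (‖1 + s‖ ^ 2) - ‖1 + s‖ ^ 2 + 1
      ≤ 2 * s.re ^ 2 + ‖s‖ ^ 2 * (1 / 10 + (y - min y 4)) := by
  set σ := ‖s‖ with hσ
  have hσ0 : 0 ≤ σ := norm_nonneg s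
  have hre : |s.re| ≤ σ := Complex.abs_re_le_norm s
  have hx : ‖1 + s‖ ^ 2 = 1 + (2 * s.re + σ ^ 2) := by
    rw [hσ, Complex.sq_norm, Complex.sq_norm, Complex.normSq_add]
    simp; ring
  have hre' := abs_le.mp hre
  have hre2 : s.re ^ 2 ≤ σ ^ 2 := by nlinarith
  have hmin : 0 ≤ y - min y 4 := by linarith [min_le_left y 4]
  rcases le_or_gt σ (1 / 1000) with h1 | h1
  · -- small
    rw [hx]
    set t := 2 * s.re + σ ^ 2 with ht
    have htb : |t| ≤ 2.001 * σ := by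
      rw [abs_le]; constructor <;> nlinarith
    have h2 := log_bound_small t (by linarith)
    have h3 : |t| ^ 3 ≤ (2.001 * σ) ^ 3 := pow_le_pow_left₀ (abs_nonneg _) htb 3
    have h4 : t ^ 2 / 2 ≤ 2 * s.re ^ 2 + 2 * σ ^ 3 + σ ^ 4 / 2 := by
      rw [ht]
      nlinarith [mul_le_mul_of_nonneg_right hre'.2 (sq_nonneg σ)]
    have h5 : σ ^ 3 ≤ 1 / 1000 * σ ^ 2 := by nlinarith [sq_nonneg σ]
    have h6 : σ ^ 4 ≤ 1 / 1000 * σ ^ 2 := by nlinarith [sq_nonneg σ, pow_nonneg hσ0 3]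
    nlinarith [mul_nonneg (sq_nonneg σ) hmin]
  · have hσp : 0 < σ := by linarith
    have hlogτ : Real.log τ ≤ -30 := by
      rw [Real.log_le_iff_le_exp hτ]; exact hτ0
    have hyl : Real.log (σ ^ 2) + 30 ≤ y := by
      have := Real.log_le_log (by positivity) hs
      rw [Real.log_mul hτ.ne' (Real.exp_pos _).ne', Real.log_exp] at this
      linarith
    have hη : -14 ≤ Real.log (σ ^ 2) := by
      rw [Real.le_log_iff_exp_le (by positivity)]
      have : Real.exp (-14) ≤ (1 / 1000) ^ 2 := by
        rw [Real.exp_neg, show (14 : ℝ) = (14 : ℕ) * 1 by norm_num, Real.exp_nat_mul]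
        rw [inv_le_comm₀ (by positivity) (by norm_num)]
        have h := Real.exp_one_gt_d9
        calc ((1 / 1000 : ℝ) ^ 2)⁻¹ ≤ 2.7182818283 ^ 14 := by norm_num
          _ ≤ Real.exp 1 ^ 14 := pow_le_pow_left₀ (by norm_num) h.le 14
      refine this.trans ?_
      exact pow_le_pow_left₀ (by norm_num) h1.le 2
    have hmin4 : min y 4 = 4 := min_eq_right (by linarith)
    rw [hmin4]
    have hx0 : 0 ≤ ‖1 + s‖ ^ 2 := by positivity
    rcases le_or_gt σ 1 with h2 | h2
    · -- medium
      have h3 : ‖1 + s‖ ^ 2 * Real.log (‖1 + s‖ ^ 2) - ‖1 + s‖ ^ 2 + 1 ≤ (2 * s.re + σ ^ 2) ^ 2 := by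
        rcases hx0.eq_or_lt with h | h
        · rw [← h] at hx ⊢
          have : 2 * s.re + σ ^ 2 = -1 := by linarith
          rw [this]; norm_num
        · have := mul_le_mul_of_nonneg_left (Real.log_le_sub_one_of_pos h) hx0
          have e : 2 * s.re + σ ^ 2 = ‖1 + s‖ ^ 2 - 1 := by linarith
          rw [e]; nlinarith
      have h4 : (2 * s.re + σ ^ 2) ^ 2 ≤ 9 * σ ^ 2 := by
        have : |2 * s.re + σ ^ 2| ≤ 3 * σ := by rw [abs_le]; constructor <;> nlinarith
        have := pow_le_pow_left₀ (abs_nonneg _) this 2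
        rw [sq_abs] at this; linarith
      nlinarith [sq_nonneg σ, sq_nonneg s.re]
    · -- large
      have h3 : ‖1 + s‖ ^ 2 * Real.log (‖1 + s‖ ^ 2) - ‖1 + s‖ ^ 2 + 1 ≤ σ ^ 2 * Real.log (σ ^ 2) + 12 * σ ^ 2 := by
        have hls : 0 ≤ Real.log σ := Real.log_nonneg h2.le
        have hl2 : Real.log (σ ^ 2) = 2 * Real.log σ := by rw [Real.log_pow]; norm_num
        rcases le_or_gt 1 (‖1 + s‖ ^ 2) with h | h
        · have hX : ‖1 + s‖ ^ 2 ≤ (1 + σ) ^ 2 := by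
            refine pow_le_pow_left₀ (norm_nonneg _) ?_ 2
            have := norm_add_le 1 s
            simpa using this
          have h5 : ‖1 + s‖ ^ 2 * Real.log (‖1 + s‖ ^ 2) ≤ (1 + σ) ^ 2 * Real.log ((1 + σ) ^ 2) :=
            mul_le_mul hX (Real.log_le_log (by linarith) hX) (Real.log_nonneg h) (by positivity)
          have h6 := ptw_large σ h2.le
          linarith
        · have : ‖1 + s‖ ^ 2 * Real.log (‖1 + s‖ ^ 2) ≤ 0 :=
            mul_nonpos_of_nonneg_of_nonpos hx0 (Real.log_nonpos hx0 h.le)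
          rw [hl2]
          nlinarith [mul_nonneg (sq_nonneg σ) hls]
      have h11 := mul_le_mul_of_nonneg_left hyl (sq_nonneg σ)
      linarith [sq_nonneg σ, sq_nonneg s.re, show σ ^ 2 * (1 / 10 + (y - 4)) = σ ^ 2 * y - (39 / 10) * σ ^ 2 by ring,
        mul_add (σ ^ 2) (Real.log (σ ^ 2)) 30]


lemma cheb (h : ℂ → ℂ) (hh : Differentiable ℂ h) (c0 : coef h 0 = 0) (c1 : coef h 1 = 0)
    (i0 : Integrable fun z : ℂ => ‖h z‖ ^ 2 * Real.exp (-‖z‖ ^ 2)) :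
    0 ≤ ∫ z : ℂ, ‖h z‖ ^ 2 * ((min (‖z‖ ^ 2) 4 - 11 / 5) * Real.exp (-‖z‖ ^ 2)) := by
  have hhc := hh.continuous
  have hpi := Real.pi_pos
  have hi : Integrable fun z : ℂ => ‖h z‖ ^ 2 * ((min (‖z‖ ^ 2) 4 - 11 / 5) * Real.exp (-‖z‖ ^ 2)) := by
    refine (i0.const_mul 10).mono' (by apply Continuous.aestronglyMeasurable; fun_prop)
      (Filter.Eventually.of_forall fun z => ?_)
    rw [norm_mul, norm_mul, Real.norm_of_nonneg (by positivity : 0 ≤ ‖h z‖ ^ 2), Real.norm_of_nonneg (Real.exp_pos _).le]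
    have : ‖min (‖z‖ ^ 2) 4 - 11 / 5‖ ≤ 10 := by
      rw [Real.norm_eq_abs, abs_le]
      have h1 : 0 ≤ min (‖z‖ ^ 2) 4 := le_min (by positivity) (by norm_num)
      have h2 := min_le_right (‖z‖ ^ 2) 4
      constructor <;> linarith
    have h3 : 0 ≤ ‖h z‖ ^ 2 * Real.exp (-‖z‖ ^ 2) := by positivity
    nlinarith [mul_le_mul_of_nonneg_right this h3]
  rw [polar_int _ hi (by fun_prop)]
  by_cases hI : IntegrableOn (fun r => (2 * Real.pi * r) • Real.circleAverage
      (fun z : ℂ => ‖h z‖ ^ 2 * ((min (‖z‖ ^ 2) 4 - 11 / 5) * Real.exp (-‖z‖ ^ 2))) 0 r) (Set.Ioi 0)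
  swap
  · rw [integral_undef hI]
  set A : ℝ → ℝ := fun r => Real.circleAverage (fun z => ‖h z‖ ^ 2) 0 r with hA
  set r0 : ℝ := Real.sqrt (11 / 5) with hr0
  have hr0p : 0 < r0 := Real.sqrt_pos.mpr (by norm_num)
  have hr02 : r0 ^ 2 = 11 / 5 := Real.sq_sqrt (by norm_num)
  have hA0 : 0 ≤ A r0 := circ_nonneg _ (fun z => by positivity) _
  have key : ∀ r s : ℝ, 0 < r → r ≤ s → A r * s ^ 4 ≤ A s * r ^ 4 := by
    intro r s hr hrs
    refine hasSum_le (fun k => ?_) ((parseval h hh r hr.le).mul_right (s ^ 4))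
      ((parseval h hh s (hr.le.trans hrs)).mul_right (r ^ 4))
    match k with
    | 0 => simp [c0]
    | 1 => simp [c1]
    | k + 2 =>
      have e1 : r ^ (2 * (k + 2)) * s ^ 4 ≤ s ^ (2 * (k + 2)) * r ^ 4 := by
        have : r ^ (2 * k) ≤ s ^ (2 * k) := pow_le_pow_left₀ hr.le hrs _
        have := mul_le_mul_of_nonneg_right this (by positivity : 0 ≤ r ^ 4 * s ^ 4)
        calc _ = r ^ (2 * k) * (r ^ 4 * s ^ 4) := by ring
          _ ≤ _ := this
          _ = _ := by ring
      rw [mul_assoc, mul_assoc]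
      exact mul_le_mul_of_nonneg_left e1 (by positivity)
  have m2 := mom 2
  have m3 := mom 3
  have m4 := mom 4
  have hJ : IntegrableOn (fun r : ℝ => A r0 * (2 * Real.pi * r * (r ^ (2 * 3) * Real.exp (-r ^ 2))
      - (1 / 16) * (2 * Real.pi * r * (r ^ (2 * 4) * Real.exp (-r ^ 2)))
      - (11 / 5) * (2 * Real.pi * r * (r ^ (2 * 2) * Real.exp (-r ^ 2))))) (Set.Ioi 0) :=
    ((m3.1.sub (m4.1.const_mul _)).sub (m2.1.const_mul _)).const_mul _
  have hJv : ∫ r in Set.Ioi (0:ℝ), A r0 * (2 * Real.pi * r * (r ^ (2 * 3) * Real.exp (-r ^ 2))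
      - (1 / 16) * (2 * Real.pi * r * (r ^ (2 * 4) * Real.exp (-r ^ 2)))
      - (11 / 5) * (2 * Real.pi * r * (r ^ (2 * 2) * Real.exp (-r ^ 2)))) = A r0 * (Real.pi / 10) := by
    rw [integral_const_mul]
    congr 1
    have e1 := integral_sub (m3.1.sub (m4.1.const_mul (1 / 16))) (m2.1.const_mul (11 / 5))
    simp only [Pi.sub_apply] at e1
    rw [e1, integral_sub m3.1 (m4.1.const_mul (1 / 16)), integral_const_mul, integral_const_mul, m2.2, m3.2, m4.2]
    norm_num [Nat.factorial]
    ring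
  have hmono := setIntegral_mono_on hJ (hI.const_mul (r0 ^ 4)) measurableSet_Ioi (by
    intro r hr
    have hr : (0:ℝ) < r := hr
    simp only [smul_eq_mul]
    rw [circ_radial (fun z => ‖h z‖ ^ 2) (fun r => (min (r ^ 2) 4 - 11 / 5) * Real.exp (-r ^ 2)) r hr.le]
    have hE := Real.exp_pos (-r ^ 2)
    have h1 : r ^ 2 - r ^ 4 / 16 - 11 / 5 ≤ min (r ^ 2) 4 - 11 / 5 := by
      have : r ^ 2 - r ^ 4 / 16 ≤ min (r ^ 2) 4 := le_min (by linarith [pow_pos hr 4]) (by nlinarith [sq_nonneg (r ^ 2 / 4 - 2)])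
      linarith
    have h2 : A r0 * r ^ 4 * (min (r ^ 2) 4 - 11 / 5) ≤ A r * r0 ^ 4 * (min (r ^ 2) 4 - 11 / 5) := by
      rcases le_total r r0 with hc | hc
      · have := key r r0 hr hc
        have h3 : r ^ 2 ≤ 11 / 5 := by rw [← hr02]; exact pow_le_pow_left₀ hr.le hc 2
        exact mul_le_mul_of_nonpos_right this (by linarith [min_le_left (r ^ 2) 4])
      · have := key r0 r hr0p hc
        have h3 : 11 / 5 ≤ r ^ 2 := by rw [← hr02]; exact pow_le_pow_left₀ hr0p.le hc 2
        exact mul_le_mul_of_nonneg_right this (by linarith [le_min h3 (by norm_num : (11 / 5 : ℝ) ≤ 4)])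
    have h3 : A r0 * r ^ 4 * (r ^ 2 - r ^ 4 / 16 - 11 / 5) ≤ A r * r0 ^ 4 * (min (r ^ 2) 4 - 11 / 5) :=
      (mul_le_mul_of_nonneg_left h1 (by positivity)).trans h2
    have h4 := mul_le_mul_of_nonneg_right h3 (by positivity : 0 ≤ 2 * Real.pi * r * Real.exp (-r ^ 2))
    have e1 : Real.circleAverage (fun z => ‖h z‖ ^ 2) 0 r = A r := rfl
    rw [e1]
    calc _ = A r0 * r ^ 4 * (r ^ 2 - r ^ 4 / 16 - 11 / 5) * (2 * Real.pi * r * Real.exp (-r ^ 2)) := by ring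
      _ ≤ _ := h4
      _ = _ := by ring)
  rw [hJv, integral_const_mul] at hmono
  have h4 : 0 < r0 ^ 4 := by positivity
  have h5 : 0 ≤ A r0 * (Real.pi / 10) := by positivity
  exact nonneg_of_mul_nonneg_right (h5.trans hmono) h4

lemma G_deriv_zero (G : ℂ → ℂ) (hG : Differentiable ℂ G) (h0 : G 0 ≠ 0)
    (hb : ∀ z, ‖G z‖ ^ 2 * Real.exp (-‖z‖ ^ 2) ≤ ‖G 0‖ ^ 2) : deriv G 0 = 0 := by
  have key : ∀ ζ : ℂ, ((starRingEnd ℂ) (G 0) * (deriv G 0 * ζ)).re = 0 := by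
    intro ζ
    have hd : HasDerivAt (fun t : ℝ => G (t * ζ)) (deriv G 0 * ζ) 0 := by
      have h1 : HasDerivAt (fun t : ℝ => (t : ℂ) * ζ) ζ 0 := by
        simpa using (Complex.ofRealCLM.hasDerivAt (x := (0:ℝ))).mul_const ζ
      have h2 : HasDerivAt G (deriv G 0) (((0:ℝ) : ℂ) * ζ) := by
        simpa using (hG 0).hasDerivAt
      exact h2.comp (0:ℝ) h1
    have hn : HasDerivAt (fun t : ℝ => ‖G (t * ζ)‖ ^ 2) (2 * ((starRingEnd ℂ) (G 0) * (deriv G 0 * ζ)).re) 0 := by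
      have := hd.norm_sq
      simp only [Complex.ofReal_zero, zero_mul, Complex.inner] at this
      simpa [mul_comm] using this
    have he : HasDerivAt (fun t : ℝ => Real.exp (-‖(t : ℂ) * ζ‖ ^ 2)) 0 0 := by
      have e : (fun t : ℝ => Real.exp (-‖(t : ℂ) * ζ‖ ^ 2)) = fun t : ℝ => Real.exp (-(t ^ 2 * ‖ζ‖ ^ 2)) := by
        funext t; rw [norm_mul, mul_pow, Complex.norm_real, Real.norm_eq_abs, sq_abs]
      rw [e]
      have := (((hasDerivAt_pow 2 (0:ℝ)).mul_const (‖ζ‖ ^ 2)).neg).exp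
      simpa using this
    have hm := hn.mul he
    have hl : IsLocalMax ((fun t : ℝ => ‖G (t * ζ)‖ ^ 2) * fun t : ℝ => Real.exp (-‖(t : ℂ) * ζ‖ ^ 2)) 0 := by
      refine Filter.Eventually.of_forall fun t => ?_
      simpa using hb (t * ζ)
    have := hl.hasDerivAt_eq_zero hm
    simpa using this
  have := key ((starRingEnd ℂ) (deriv G 0) * G 0)
  have e : (starRingEnd ℂ) (G 0) * (deriv G 0 * ((starRingEnd ℂ) (deriv G 0) * G 0))
      = ((Complex.normSq (G 0) * Complex.normSq (deriv G 0) : ℝ) : ℂ) := by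
    push_cast
    rw [← Complex.mul_conj, ← Complex.mul_conj]; ring
  rw [e, Complex.ofReal_re, mul_eq_zero] at this
  rcases this with h | h
  · exact absurd (Complex.normSq_eq_zero.mp h) h0
  · exact Complex.normSq_eq_zero.mp h


def HI (f : ℂ → ℝ) (v : ℝ) : Prop := Integrable f ∧ ∫ z, f z = v

lemma HI.add {f g : ℂ → ℝ} {v w : ℝ} (hf : HI f v) (hg : HI g w) : HI (fun z => f z + g z) (v + w) :=
  ⟨hf.1.add hg.1, by rw [integral_add hf.1 hg.1, hf.2, hg.2]⟩
lemma HI.sub {f g : ℂ → ℝ} {v w : ℝ} (hf : HI f v) (hg : HI g w) : HI (fun z => f z - g z) (v - w) :=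
  ⟨hf.1.sub hg.1, by rw [integral_sub hf.1 hg.1, hf.2, hg.2]⟩
lemma HI.smul {f : ℂ → ℝ} {v : ℝ} (hf : HI f v) (c : ℝ) : HI (fun z => c * f z) (c * v) :=
  ⟨hf.1.const_mul c, by rw [integral_const_mul, hf.2]⟩
lemma HI.mono {f g : ℂ → ℝ} {v w : ℝ} (hf : HI f v) (hg : HI g w) (h : ∀ z, f z ≤ g z) : v ≤ w := by
  rw [← hf.2, ← hg.2]; exact integral_mono hf.1 hg.1 h
lemma HI.of {f : ℂ → ℝ} (hf : Integrable f) : HI f (∫ z, f z) := ⟨hf, rfl⟩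
lemma HI.congr {f g : ℂ → ℝ} {v : ℝ} (hf : HI f v) (h : ∀ z, g z = f z) : HI g v := by
  have : g = f := funext h
  rw [this]; exact hf

lemma near (G : ℂ → ℂ) (hG : Differentiable ℂ G)
    (i0 : Integrable fun z : ℂ => ‖G z‖ ^ 2 * Real.exp (-‖z‖ ^ 2))
    (i1 : Integrable fun z : ℂ => ‖deriv G z‖ ^ 2 * Real.exp (-‖z‖ ^ 2))
    (n1 : ∫ z : ℂ, ‖G z‖ ^ 2 * Real.exp (-‖z‖ ^ 2) = Real.pi)
    (h0 : G 0 ≠ 0)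
    (hb : ∀ z, ‖G z‖ ^ 2 * Real.exp (-‖z‖ ^ 2) ≤ ‖G 0‖ ^ 2)
    (hT1 : ‖G 0‖ ^ 2 ≤ 1)
    (hT : 1 - ‖G 0‖ ^ 2 ≤ Real.exp (-30) * ‖G 0‖ ^ 2) :
    1 / 10 * (1 - ‖G 0‖ ^ 2) * Real.pi ≤ (∫ z : ℂ, ‖deriv G z‖ ^ 2 * Real.exp (-‖z‖ ^ 2)) -
      ∫ z : ℂ, ‖G z‖ ^ 2 * Real.log (‖G z‖ ^ 2) * Real.exp (-‖z‖ ^ 2) := by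
  have hGc := hG.continuous
  have hpi := Real.pi_pos
  have hd0 := G_deriv_zero G hG h0 hb
  have hent := (ent G hG i0 i1 (fun z => (hb z).trans hT1)).1
  set T := ‖G 0‖ ^ 2 with hTd
  have hTp : 0 < T := by positivity
  set h : ℂ → ℂ := fun z => (G 0)⁻¹ * G z - 1 with hh
  have hhd : Differentiable ℂ h := by simp only [hh]; fun_prop
  have hhc := hhd.continuous
  have hderiv : ∀ z, deriv h z = (G 0)⁻¹ * deriv G z := by
    intro z
    exact (((hG z).hasDerivAt.const_mul _).sub_const 1).deriv
  have c0 : coef h 0 = 0 := by rw [coef_zero]; simp [hh, h0]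
  have c1 : coef h 1 = 0 := by rw [coef_one, hderiv, hd0, mul_zero]
  have h00 : h 0 = 0 := by simp [hh, h0]
  have hGh : ∀ z, G z = G 0 * (1 + h z) := by intro z; simp only [hh]; field_simp; ring
  have hGn : ∀ z, ‖G z‖ ^ 2 = T * ‖1 + h z‖ ^ 2 := by intro z; rw [hGh z, norm_mul, mul_pow]
  have hx : ∀ z, ‖1 + h z‖ ^ 2 = 1 + 2 * (h z).re + ‖h z‖ ^ 2 := by
    intro z
    rw [Complex.sq_norm, Complex.sq_norm, Complex.normSq_add]
    simp; ring
  have ih : Integrable fun z : ℂ => ‖h z‖ ^ 2 * Real.exp (-‖z‖ ^ 2) := by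
    refine ((i0.const_mul (2 / T)).add (exp_int.1.const_mul 2)).mono' (by apply Continuous.aestronglyMeasurable; fun_prop)
      (Filter.Eventually.of_forall fun z => ?_)
    simp only [Pi.add_apply]
    rw [Real.norm_of_nonneg (by positivity), hGn]
    have e : 2 / T * (T * ‖1 + h z‖ ^ 2 * Real.exp (-‖z‖ ^ 2)) + 2 * Real.exp (-‖z‖ ^ 2) =
      (2 * ‖1 + h z‖ ^ 2 + 2) * Real.exp (-‖z‖ ^ 2) := by field_simp
    rw [e]
    refine mul_le_mul_of_nonneg_right ?_ (Real.exp_pos _).le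
    have h2 := norm_sub_le (1 + h z) 1
    simp only [add_sub_cancel_left, norm_one] at h2
    have := pow_le_pow_left₀ (norm_nonneg _) h2 2
    nlinarith [sq_nonneg (‖1 + h z‖ - 1)]
  have ih1 : Integrable fun z : ℂ => ‖deriv h z‖ ^ 2 * Real.exp (-‖z‖ ^ 2) := by
    refine (i1.const_mul T⁻¹).congr (Filter.Eventually.of_forall fun z => ?_)
    simp only [hderiv, norm_mul, mul_pow, norm_inv, inv_pow]
    rw [← hTd]; ring
  have eK1 : ∫ z : ℂ, ‖deriv G z‖ ^ 2 * Real.exp (-‖z‖ ^ 2) = T * ∫ z : ℂ, ‖deriv h z‖ ^ 2 * Real.exp (-‖z‖ ^ 2) := by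
    rw [← integral_const_mul]
    refine integral_congr_ae (Filter.Eventually.of_forall fun z => ?_)
    simp only [hderiv, norm_mul, mul_pow, norm_inv, inv_pow]
    rw [← hTd]; field_simp
  have hi1 : Integrable fun z : ℂ => h z * ((Real.exp (-‖z‖ ^ 2) : ℝ) : ℂ) := by
    refine (ih.add exp_int.1).mono' (by apply Continuous.aestronglyMeasurable; fun_prop)
      (Filter.Eventually.of_forall fun z => ?_)
    rw [norm_mul, Complex.norm_real, Real.norm_of_nonneg (Real.exp_pos _).le]
    simp only [Pi.add_apply]
    nlinarith [Real.exp_pos (-‖z‖ ^ 2), mul_nonneg (sq_nonneg (‖h z‖ - 1)) (Real.exp_pos (-‖z‖ ^ 2)).le, norm_nonneg (h z), mul_nonneg (norm_nonneg (h z)) (Real.exp_pos (-‖z‖ ^ 2)).le]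
  have hi2 : Integrable fun z : ℂ => h z ^ 2 * ((Real.exp (-‖z‖ ^ 2) : ℝ) : ℂ) := by
    refine ih.mono' (by apply Continuous.aestronglyMeasurable; fun_prop)
      (Filter.Eventually.of_forall fun z => ?_)
    rw [norm_mul, Complex.norm_real, Real.norm_of_nonneg (Real.exp_pos _).le, norm_pow]
  have m1 : HI (fun z : ℂ => (h z).re * Real.exp (-‖z‖ ^ 2)) 0 := by
    refine ⟨?_, mean_radial_re h hhd (fun r => Real.exp (-r ^ 2)) (by fun_prop) h00 hi1⟩
    have := hi1.re
    simpa only [RCLike.re_eq_complex_re, Complex.re_mul_ofReal] using this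
  have m2 : HI (fun z : ℂ => (h z ^ 2).re * Real.exp (-‖z‖ ^ 2)) 0 := by
    refine ⟨?_, mean_radial_re (fun z => h z ^ 2) (by fun_prop) (fun r => Real.exp (-r ^ 2)) (by fun_prop) (by simp [h00]) hi2⟩
    have := hi2.re
    simpa only [RCLike.re_eq_complex_re, Complex.re_mul_ofReal] using this
  have mK := HI.of ih
  set K := ∫ z : ℂ, ‖h z‖ ^ 2 * Real.exp (-‖z‖ ^ 2) with hK
  have mE : HI (fun z : ℂ => Real.exp (-‖z‖ ^ 2)) Real.pi := exp_int
  have mG : HI (fun z : ℂ => ‖G z‖ ^ 2 * Real.exp (-‖z‖ ^ 2)) Real.pi := ⟨i0, n1⟩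
  have hTK : T * K = Real.pi * (1 - T) := by
    have := ((mE.add (m1.smul 2)).add mK).smul T
    have h2 := (this.congr (g := fun z : ℂ => ‖G z‖ ^ 2 * Real.exp (-‖z‖ ^ 2)) (fun z => by rw [hGn, hx]; ring)).2
    rw [n1] at h2
    linarith
  set K1 := ∫ z : ℂ, ‖deriv h z‖ ^ 2 * Real.exp (-‖z‖ ^ 2) with hK1
  have mY : HI (fun z : ℂ => ‖h z‖ ^ 2 * (‖z‖ ^ 2 * Real.exp (-‖z‖ ^ 2))) (K1 + K) :=
    ⟨((fock_deriv h hhd ih).1).2 ih1, (fock_deriv h hhd ih).2 ih1⟩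
  have mC0 : Integrable fun z : ℂ => ‖h z‖ ^ 2 * ((min (‖z‖ ^ 2) 4 - 11 / 5) * Real.exp (-‖z‖ ^ 2)) := by
    refine (ih.const_mul 10).mono' (by apply Continuous.aestronglyMeasurable; fun_prop)
      (Filter.Eventually.of_forall fun z => ?_)
    rw [norm_mul, norm_mul, Real.norm_of_nonneg (by positivity : 0 ≤ ‖h z‖ ^ 2), Real.norm_of_nonneg (Real.exp_pos _).le]
    have : ‖min (‖z‖ ^ 2) 4 - 11 / 5‖ ≤ 10 := by
      rw [Real.norm_eq_abs, abs_le]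
      have h1 : 0 ≤ min (‖z‖ ^ 2) 4 := le_min (by positivity) (by norm_num)
      have h2 := min_le_right (‖z‖ ^ 2) 4
      constructor <;> linarith
    have h3 : 0 ≤ ‖h z‖ ^ 2 * Real.exp (-‖z‖ ^ 2) := by positivity
    nlinarith [mul_le_mul_of_nonneg_right this h3]
  have mC := HI.of mC0
  have hC := cheb h hhd c0 c1 ih
  set C := ∫ z : ℂ, ‖h z‖ ^ 2 * ((min (‖z‖ ^ 2) 4 - 11 / 5) * Real.exp (-‖z‖ ^ 2)) with hCd
  have mS := ((((mK.smul (-11 / 10)).add m2).add mY).sub mC).smul T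
  have mR := (mS.add (mG.sub (mE.smul T))).add (mG.smul (Real.log T))
  have mL := HI.of hent
  have fin := mL.mono mR (by
    intro z
    have hs : ‖h z‖ ^ 2 ≤ Real.exp (-30) * Real.exp (‖z‖ ^ 2) := by
      have p := ptwise h hhd ih z
      have hK2 : K ≤ Real.exp (-30) * Real.pi := by
        have : T * K ≤ T * (Real.exp (-30) * Real.pi) := by
          rw [hTK]; nlinarith [mul_le_mul_of_nonneg_right hT hpi.le]
        exact le_of_mul_le_mul_left this hTp
      have p2 : ‖h z‖ ^ 2 * Real.exp (-‖z‖ ^ 2) ≤ Real.exp (-30) :=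
        le_of_mul_le_mul_right (p.trans hK2) hpi
      rw [Real.exp_neg (‖z‖ ^ 2), ← div_eq_mul_inv, div_le_iff₀ (Real.exp_pos _)] at p2
      exact p2
    have p := ptw (h z) (‖z‖ ^ 2) (Real.exp (-30)) (Real.exp_pos _) le_rfl hs (by positivity)
    have e1 : 2 * (h z).re ^ 2 = ‖h z‖ ^ 2 + (h z ^ 2).re := by
      rw [Complex.sq_norm, Complex.normSq_apply, pow_two (h z), Complex.mul_re]; ring
    have e2 : ‖G z‖ ^ 2 * Real.log (‖G z‖ ^ 2) = T * (‖1 + h z‖ ^ 2 * Real.log (‖1 + h z‖ ^ 2) - ‖1 + h z‖ ^ 2 + 1)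
        + (‖G z‖ ^ 2 - T) + Real.log T * ‖G z‖ ^ 2 := by
      rw [hGn]
      rcases eq_or_ne (‖1 + h z‖ ^ 2) 0 with hz | hz
      · rw [hz]; simp
      · rw [Real.log_mul hTp.ne' hz]; ring
    rw [e2]
    rw [e1] at p
    have p2 := mul_le_mul_of_nonneg_right (mul_le_mul_of_nonneg_left p hTp.le) (Real.exp_pos (-‖z‖ ^ 2)).le
    linear_combination p2)
  have hlog := Real.log_le_sub_one_of_pos hTp
  have := mul_le_mul_of_nonneg_right hlog hpi.le
  have hTC : 0 ≤ T * C := mul_nonneg hTp.le hC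
  rw [eK1]
  linear_combination fin + this + hTC - (1 / 10) * hTK


lemma gm (k : ℕ) (b : ℝ) (hb : 0 < b) :
    HI (fun z : ℂ => (‖z‖ ^ 2) ^ k * Real.exp (-(b * ‖z‖ ^ 2))) (Real.pi * k.factorial / b ^ (k + 1)) := by
  have hpi := Real.pi_pos
  have hv : ∫ z : ℂ, (‖z‖ ^ 2) ^ k * Real.exp (-(b * ‖z‖ ^ 2)) = Real.pi * k.factorial / b ^ (k + 1) := by
    have h := Complex.integral_rpow_mul_exp_neg_mul_rpow (p := 2) (q := ((2 * k : ℕ) : ℝ)) (b := b) (by norm_num)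
      (by linarith [((2 * k : ℕ).cast_nonneg : (0:ℝ) ≤ _)]) hb
    have e : ∀ z : ℂ, ‖z‖ ^ ((2 * k : ℕ) : ℝ) * Real.exp (-b * ‖z‖ ^ (2:ℝ)) = (‖z‖ ^ 2) ^ k * Real.exp (-(b * ‖z‖ ^ 2)) := by
      intro z
      rw [Real.rpow_natCast, Real.rpow_two, pow_mul, neg_mul]
    simp only [e] at h
    rw [h]
    have e2 : (((2 * k : ℕ) : ℝ) + 2) / 2 = (k:ℝ) + 1 := by push_cast; ring
    have e3 : -(((2 * k : ℕ) : ℝ) + 2) / 2 = -((k + 1 : ℕ) : ℝ) := by push_cast; ring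
    rw [e2, e3, Real.Gamma_nat_eq_factorial, Real.rpow_neg hb.le, Real.rpow_natCast]
    field_simp
  refine ⟨?_, hv⟩
  by_contra hc
  rw [integral_undef hc] at hv
  have : 0 < Real.pi * k.factorial / b ^ (k + 1) := by positivity
  linarith

lemma ser_bound (b : ℕ → ℂ) (hb : ∀ j, ‖b j‖ ^ 2 * j.factorial ≤ 2) (z v : ℂ)
    (hv : HasSum (fun j => b j * z ^ (j + 2)) v) : ‖v‖ ≤ 2 * (‖z‖ ^ 2 * Real.exp (2 * ‖z‖ ^ 2)) := by
  have g1 : HasSum (fun j : ℕ => (1 / 2 : ℝ) ^ j) 2 := hasSum_geometric_two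
  have g2 : HasSum (fun j : ℕ => (2 * ‖z‖ ^ 2) ^ j / j.factorial) (Real.exp (2 * ‖z‖ ^ 2)) := by
    rw [Real.exp_eq_exp_ℝ]
    exact NormedSpace.expSeries_div_hasSum_exp (2 * ‖z‖ ^ 2)
  have g := ((g1.mul_left (1 / 2)).add g2).mul_left (‖z‖ ^ 2)
  have := hv.norm_le_of_bounded g (fun j => by
    rw [norm_mul, norm_pow, pow_add]
    have hf : (0:ℝ) < j.factorial := by positivity
    have h1 : ‖b j‖ ^ 2 ≤ 2 / j.factorial := by rw [le_div_iff₀ hf]; exact hb j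
    have h2 : ‖b j‖ * ‖z‖ ^ j ≤ 1 / 2 * (1 / 2) ^ j + (2 * ‖z‖ ^ 2) ^ j / j.factorial := by
      have hh := mul_le_mul_of_nonneg_right h1 (by positivity : 0 ≤ 2 ^ j * (‖z‖ ^ j) ^ 2)
      have e1 : 2 / (j.factorial : ℝ) * (2 ^ j * (‖z‖ ^ j) ^ 2) = 2 * ((2 * ‖z‖ ^ 2) ^ j / j.factorial) := by
        rw [mul_pow, ← pow_mul, ← pow_mul, mul_comm j 2]; ring
      rw [e1] at hh
      have e2 : (1 / 2 : ℝ) ^ j * 2 ^ j = 1 := by rw [← mul_pow]; norm_num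
      have hq : 0 ≤ (1 / 2 : ℝ) ^ j * (1 - 2 ^ j * (‖b j‖ * ‖z‖ ^ j)) ^ 2 := by positivity
      have e3 : (1 / 2 : ℝ) ^ j * (1 - 2 ^ j * (‖b j‖ * ‖z‖ ^ j)) ^ 2 = (1 / 2) ^ j - 2 * ((1 / 2 : ℝ) ^ j * 2 ^ j) * (‖b j‖ * ‖z‖ ^ j)
        + ((1 / 2 : ℝ) ^ j * 2 ^ j) * (‖b j‖ ^ 2 * (2 ^ j * (‖z‖ ^ j) ^ 2)) := by ring
      rw [e3, e2] at hq
      linarith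
    calc _ = ‖z‖ ^ 2 * (‖b j‖ * ‖z‖ ^ j) := by ring
      _ ≤ _ := mul_le_mul_of_nonneg_left h2 (by positivity))
  refine this.trans ?_
  have : 1 ≤ Real.exp (2 * ‖z‖ ^ 2) := Real.one_le_exp (by positivity)
  nlinarith [mul_le_mul_of_nonneg_left this (by positivity : 0 ≤ ‖z‖ ^ 2)]

lemma loc_bound (G : ℂ → ℂ) (hG : Differentiable ℂ G)
    (i0 : Integrable fun z : ℂ => ‖G z‖ ^ 2 * Real.exp (-‖z‖ ^ 2))
    (n1 : ∫ z : ℂ, ‖G z‖ ^ 2 * Real.exp (-‖z‖ ^ 2) = Real.pi) (hd0 : deriv G 0 = 0) (z : ℂ) :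
    ‖G z - G 0‖ ≤ 2 * (‖z‖ ^ 2 * Real.exp (2 * ‖z‖ ^ 2)) ∧
    ‖z * deriv G z‖ ≤ 2 * (‖z‖ ^ 2 * Real.exp (2 * ‖z‖ ^ 2)) := by
  have hpi := Real.pi_pos
  have hc : ∀ k, ‖coef G k‖ ^ 2 * k.factorial ≤ 1 := by
    intro k
    have := fock_hasSum G hG i0 k
    rw [n1] at this
    have h2 : Real.pi * (‖coef G k‖ ^ 2 * k.factorial) ≤ Real.pi * 1 := by linarith
    exact le_of_mul_le_mul_left h2 hpi
  have hF' : Differentiable ℂ (deriv G) := (hG.contDiff (n := 2)).differentiable_deriv_two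
  have c1 : coef G 1 = 0 := by rw [coef_one, hd0]
  have hc2 : ∀ j : ℕ, ((j + 2 : ℝ) * (j + 1)) * (‖coef G (j + 2)‖ ^ 2 * j.factorial) ≤ 1 := by
    intro j
    have := hc (j + 2)
    rw [Nat.factorial_succ, Nat.factorial_succ] at this
    push_cast at this
    linarith
  constructor
  · refine ser_bound (fun j => coef G (j + 2)) (fun j => ?_) z _ ?_
    · have hj : (0:ℝ) ≤ j := j.cast_nonneg
      have hp : 0 ≤ ‖coef G (j + 2)‖ ^ 2 * j.factorial := by positivity
      have h3 : (1:ℝ) ≤ (j + 2 : ℝ) * (j + 1) := by nlinarith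
      nlinarith [hc2 j, mul_le_mul_of_nonneg_right h3 hp]
    · have := (hasSum_nat_add_iff' 2).mpr (coef_hasSum G hG z)
      simpa [Finset.sum_range_succ, c1, coef_zero] using this
  · refine ser_bound (fun j => (j + 2) * coef G (j + 2)) (fun j => ?_) z _ ?_
    · have hj : (0:ℝ) ≤ j := j.cast_nonneg
      have hp : 0 ≤ ‖coef G (j + 2)‖ ^ 2 * j.factorial := by positivity
      have e : ‖((j : ℂ) + 2)‖ = (j : ℝ) + 2 := by
        have : ((j : ℂ) + 2) = ((j + 2 : ℝ) : ℂ) := by push_cast; rfl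
        rw [this, Complex.norm_real, Real.norm_of_nonneg (by positivity)]
      rw [norm_mul, e, mul_pow]
      have h3 : ((j:ℝ) + 2) ^ 2 ≤ 2 * ((j + 2 : ℝ) * (j + 1)) := by nlinarith
      nlinarith [hc2 j, mul_le_mul_of_nonneg_right h3 hp]
    · have := ((hasSum_nat_add_iff' 1).mpr (coef_hasSum (deriv G) hF' z)).mul_left z
      simp only [Finset.sum_range_succ, Finset.sum_range_zero, coef_zero, hd0] at this
      simp only [zero_add, zero_mul, sub_zero, coef_deriv] at this
      refine this.congr_fun ?_
      intro j
      push_cast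
      ring


lemma alg_grad (ρ κ pr pi k1 k2 g : ℝ) (hρ : 0 < ρ) (hκ : 0 < κ) (hp : pr ^ 2 + pi ^ 2 ≤ ρ * g) :
    ((ρ * (2 * κ * k1) + κ ^ 2 * (2 * pr)) ^ 2 + (ρ * (2 * κ * k2) + κ ^ 2 * (-(2 * pi))) ^ 2) / (4 * (ρ * κ ^ 2))
      ≤ κ ^ 2 * g + 2 * κ * (pr * k1 - pi * k2) + ρ * (k1 ^ 2 + k2 ^ 2) := by
  rw [div_le_iff₀ (by positivity)]
  have := mul_le_mul_of_nonneg_left hp (by positivity : 0 ≤ 4 * κ ^ 4)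
  linear_combination this

lemma kap_pos (ε N : ℝ) (hε0 : 0 ≤ ε) (hε : ε ≤ 1 / 2) (hN : 0 ≤ N) (z : ℂ) :
    0 < Real.exp (-(N * ‖z‖ ^ 2)) ∧ Real.exp (-(N * ‖z‖ ^ 2)) ≤ 1 ∧
    1 / 2 ≤ 1 - ε * Real.exp (-(N * ‖z‖ ^ 2)) ∧ 1 - ε * Real.exp (-(N * ‖z‖ ^ 2)) ≤ 1 := by
  have h1 := Real.exp_pos (-(N * ‖z‖ ^ 2))
  have h2 : Real.exp (-(N * ‖z‖ ^ 2)) ≤ 1 := Real.exp_le_one_iff.mpr (by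
    have : 0 ≤ N * ‖z‖ ^ 2 := by positivity
    linarith)
  refine ⟨h1, h2, by nlinarith, by nlinarith⟩

lemma gradD (G : ℂ → ℂ) (hG : Differentiable ℂ G) (ε N δ : ℝ) (hε0 : 0 ≤ ε) (hε : ε ≤ 1 / 2) (hN : 0 ≤ N)
    (hδ : 0 < δ) (z : ℂ) :
    ((fderiv ℝ (fun z : ℂ => (‖G z‖ ^ 2 + δ) * (1 - ε * Real.exp (-(N * ‖z‖ ^ 2))) ^ 2) z 1) ^ 2
      + (fderiv ℝ (fun z : ℂ => (‖G z‖ ^ 2 + δ) * (1 - ε * Real.exp (-(N * ‖z‖ ^ 2))) ^ 2) z Complex.I) ^ 2)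
      / (4 * ((‖G z‖ ^ 2 + δ) * (1 - ε * Real.exp (-(N * ‖z‖ ^ 2))) ^ 2))
    ≤ (1 - ε * Real.exp (-(N * ‖z‖ ^ 2))) ^ 2 * ‖deriv G z‖ ^ 2
      + 4 * ε * N * ((1 - ε * Real.exp (-(N * ‖z‖ ^ 2))) * Real.exp (-(N * ‖z‖ ^ 2)))
        * ((starRingEnd ℂ) (G z) * (z * deriv G z)).re
      + (‖G z‖ ^ 2 + δ) * (4 * ε ^ 2 * N ^ 2 * (‖z‖ ^ 2 * Real.exp (-(N * ‖z‖ ^ 2)) ^ 2)) := by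
  obtain ⟨hE, hE1, hk, hk1⟩ := kap_pos ε N hε0 hε hN z
  have hL : HasFDerivAt G ((ContinuousLinearMap.toSpanSingleton ℂ (deriv G z)).restrictScalars ℝ) z :=
    ((hG z).hasDerivAt.hasFDerivAt).restrictScalars ℝ
  have hn := hL.norm_sq
  have hz := (hasFDerivAt_id (𝕜 := ℝ) z).norm_sq
  have hκ := (((hz.const_mul N).neg.exp).const_mul ε).const_sub 1
  have hf := (hn.add_const δ).mul (hκ.pow 2)
  simp only [id, Pi.neg_apply] at hf
  have e0 : (fun z : ℂ => (‖G z‖ ^ 2 + δ) * (1 - ε * Real.exp (-(N * ‖z‖ ^ 2))) ^ 2) =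
    ((fun z : ℂ => ‖G z‖ ^ 2 + δ) * fun z : ℂ => (1 - ε * Real.exp (-(N * ‖z‖ ^ 2))) ^ 2) := rfl
  rw [e0]
  rw [HasFDerivAt.fderiv hf]
  set E := Real.exp (-(N * ‖z‖ ^ 2)) with hEd
  set κ := 1 - ε * E with hκd
  set p := (starRingEnd ℂ) (G z) * deriv G z with hp
  have hp2 : p.re ^ 2 + p.im ^ 2 ≤ (‖G z‖ ^ 2 + δ) * ‖deriv G z‖ ^ 2 := by
    have : p.re ^ 2 + p.im ^ 2 = ‖G z‖ ^ 2 * ‖deriv G z‖ ^ 2 := by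
      rw [← mul_pow, ← RCLike.norm_conj (G z), ← norm_mul, ← hp, Complex.sq_norm, Complex.normSq_apply]; ring
    rw [this]; nlinarith [sq_nonneg ‖deriv G z‖]
  have main := alg_grad (‖G z‖ ^ 2 + δ) κ p.re p.im (2 * ε * N * E * z.re) (2 * ε * N * E * z.im) (‖deriv G z‖ ^ 2)
    (by positivity) (by linarith) hp2
  refine le_trans (le_of_eq ?_) (main.trans (le_of_eq ?_))
  · congr 2
    · congr 1
      simp [Complex.inner, hp]
      ring
    · congr 1
      simp [Complex.inner, hp]
      ring
  · have e1 : ((starRingEnd ℂ) (G z) * (z * deriv G z)).re = p.re * z.re - p.im * z.im := by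
      have : (starRingEnd ℂ) (G z) * (z * deriv G z) = p * z := by rw [hp]; ring
      rw [this, Complex.mul_re]
    have e2 : ‖z‖ ^ 2 = z.re ^ 2 + z.im ^ 2 := by rw [Complex.sq_norm, Complex.normSq_apply]; ring
    rw [e1, e2]; ring


lemma xlogx_low (g P δ : ℝ) (hg : 0 ≤ g) (hP : 0 < P) (hP1 : P ≤ 1) (hδ : 0 < δ) (hδ1 : δ ≤ 1) :
    P * (g * Real.log g) + g * (P - 1) + δ * Real.log δ - δ ≤ ((g + δ) * P) * Real.log ((g + δ) * P) := by
  rw [Real.log_mul (by positivity) hP.ne']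
  have h1 : P - 1 ≤ P * Real.log P := by
    have := Real.one_sub_inv_le_log_of_pos hP
    have h3 := mul_le_mul_of_nonneg_left this hP.le
    rw [mul_sub, mul_inv_cancel₀ hP.ne'] at h3
    linarith
  have h2 : g * Real.log g ≤ g * Real.log (g + δ) := by
    rcases hg.eq_or_lt with h | h
    · rw [← h]; simp
    · exact mul_le_mul_of_nonneg_left (Real.log_le_log h (by linarith)) hg
  have h3 : δ * Real.log δ ≤ δ * Real.log (g + δ) :=
    mul_le_mul_of_nonneg_left (Real.log_le_log hδ (by linarith)) hδ.le
  have h4 : δ * Real.log δ ≤ 0 := mul_nonpos_of_nonneg_of_nonpos hδ.le (Real.log_nonpos hδ.le hδ1)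
  have a1 := mul_le_mul_of_nonneg_left (add_le_add h2 h3) hP.le
  have a2 := mul_le_mul_of_nonneg_left h1 (by positivity : 0 ≤ g + δ)
  have a3 : δ * Real.log δ ≤ P * (δ * Real.log δ) := by nlinarith
  have a4 : 0 ≤ δ * P := by positivity
  linarith [show ((g + δ) * P) * (Real.log (g + δ) + Real.log P) = P * (g * Real.log (g + δ) + δ * Real.log (g + δ)) + (g + δ) * (P * Real.log P) by ring]

lemma low_pt (g P E y a ε : ℝ) (hg : 0 ≤ g) (hE : 0 < E) (hE1 : E ≤ 1) (hε0 : 0 ≤ ε) (hε : ε ≤ 1 / 2)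
    (hP : P = (1 - ε * E) ^ 2) (ha : 0 ≤ a) (hy : 0 ≤ y) (hgl : g * Real.log g ≤ g * (y - a)) :
    g * Real.log g + ε * a * (g * E) - 2 * ε * (y * g * E) ≤ P * (g * Real.log g) := by
  have hεE : ε * E ≤ ε := by nlinarith
  have p1 : ε * E ≤ 1 - P := by rw [hP]; nlinarith [mul_nonneg hε0 hE.le]
  have p2 : 1 - P ≤ 2 * ε * E := by rw [hP]; nlinarith [sq_nonneg (ε * E)]
  have h1 := mul_le_mul_of_nonneg_left hgl ((mul_nonneg hε0 hE.le).trans p1)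
  have h2 := mul_le_mul_of_nonneg_right p1 (by positivity : 0 ≤ g * a)
  have h3 := mul_le_mul_of_nonneg_right p2 (by positivity : 0 ≤ g * y)
  linarith

set_option maxHeartbeats 1000000 in
lemma far_delta (G : ℂ → ℂ) (hG : Differentiable ℂ G)
    (i0 : Integrable fun z : ℂ => ‖G z‖ ^ 2 * Real.exp (-‖z‖ ^ 2))
    (i1 : Integrable fun z : ℂ => ‖deriv G z‖ ^ 2 * Real.exp (-‖z‖ ^ 2))
    (n1 : ∫ z : ℂ, ‖G z‖ ^ 2 * Real.exp (-‖z‖ ^ 2) = Real.pi)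
    (h0 : G 0 ≠ 0)
    (hb : ∀ z, ‖G z‖ ^ 2 * Real.exp (-‖z‖ ^ 2) ≤ ‖G 0‖ ^ 2)
    (hT1 : ‖G 0‖ ^ 2 ≤ 1) (ε N δ : ℝ) (hε0 : 0 ≤ ε) (hε4 : ε ≤ 1 / 4) (hN : 6 ≤ N) (hδ : 0 < δ) (hδ1 : δ ≤ 1) :
    ε * (-Real.log (‖G 0‖ ^ 2)) * (‖G 0‖ ^ 2 * (Real.pi / (N + 1)))
      - Real.pi * (2 * ε / N ^ 2 + 32 * ε * N / (N - 3) ^ 3 + ε ^ 2 * (1 + δ) + (2 * ε + δ) ^ 2 + 2 * δ - δ * Real.log δ)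
    ≤ (∫ z : ℂ, ‖deriv G z‖ ^ 2 * Real.exp (-‖z‖ ^ 2)) -
      ∫ z : ℂ, ‖G z‖ ^ 2 * Real.log (‖G z‖ ^ 2) * Real.exp (-‖z‖ ^ 2) := by
  have hε : ε ≤ 1 / 2 := by linarith
  have hGc := hG.continuous
  have hF' : Differentiable ℂ (deriv G) := (hG.contDiff (n := 2)).differentiable_deriv_two
  have hF'c := hF'.continuous
  have hpi := Real.pi_pos
  have hd0 := G_deriv_zero G hG h0 hb
  have hent := (ent G hG i0 i1 (fun z => (hb z).trans hT1)).1
  have iy := ((fock_deriv G hG i0).1).2 i1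
  have hN0 : 0 ≤ N := by linarith
  set T := ‖G 0‖ ^ 2 with hTd
  have hTp : 0 < T := by positivity
  set a := -Real.log T with had
  have ha : 0 ≤ a := by rw [had]; linarith [Real.log_nonpos hTp.le hT1]
  set E : ℂ → ℝ := fun z => Real.exp (-(N * ‖z‖ ^ 2)) with hEd
  set κ : ℂ → ℝ := fun z => 1 - ε * E z with hκd
  have hEc : Continuous E := by simp only [hEd]; fun_prop
  have hκc : Continuous κ := by simp only [hκd]; fun_prop
  have kp : ∀ z, 0 < E z ∧ E z ≤ 1 ∧ 1 / 2 ≤ κ z ∧ κ z ≤ 1 := fun z => kap_pos ε N hε0 hε hN0 z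
  have hP1 : ∀ z, 0 < κ z ^ 2 ∧ κ z ^ 2 ≤ 1 := fun z => by
    obtain ⟨_, _, h3, h4⟩ := kp z
    exact ⟨by positivity, pow_le_one₀ (by linarith) h4⟩
  have hgw : ∀ z, ‖G z‖ ^ 2 ≤ T * Real.exp (‖z‖ ^ 2) := by
    intro z
    have := hb z
    rw [Real.exp_neg, ← div_eq_mul_inv, div_le_iff₀ (Real.exp_pos _)] at this
    exact this
  set f : ℂ → ℝ := fun z => (‖G z‖ ^ 2 + δ) * κ z ^ 2 with hfd
  have hfpos : ∀ z, 0 < f z := fun z => mul_pos (by positivity) (hP1 z).1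
  have hfc : Continuous f := by simp only [hfd]; fun_prop
  have hfC : ContDiff ℝ 1 f := by
    have h1 : ContDiff ℝ 1 G := (hG.contDiff (n := 1)).restrict_scalars ℝ
    have h2 : ContDiff ℝ 1 fun z => ‖G z‖ ^ 2 := h1.norm_sq ℝ
    have h3 : ContDiff ℝ 1 fun z : ℂ => ‖z‖ ^ 2 := contDiff_norm_sq ℝ
    simp only [hfd, hκd, hEd]
    fun_prop
  -- mean zero term
  have hM : HI (fun z => ((starRingEnd ℂ) (G 0) * (z * deriv G z)).re * (κ z * E z * Real.exp (-‖z‖ ^ 2))) 0 := by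
    have hi : Integrable fun z : ℂ => ((starRingEnd ℂ) (G 0) * (z * deriv G z)) *
        (((1 - ε * Real.exp (-(N * ‖z‖ ^ 2))) * Real.exp (-(N * ‖z‖ ^ 2)) * Real.exp (-‖z‖ ^ 2) : ℝ) : ℂ) := by
      refine (i1.add exp_int.1).mono' (by apply Continuous.aestronglyMeasurable; fun_prop)
        (Filter.Eventually.of_forall fun z => ?_)
      obtain ⟨k1, k2, k3, k4⟩ := kp z
      simp only [hκd, hEd] at k1 k2 k3 k4
      rw [norm_mul, Complex.norm_real, Real.norm_of_nonneg (by positivity), norm_mul, norm_mul, RCLike.norm_conj]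
      simp only [Pi.add_apply]
      have hw := Real.exp_pos (-‖z‖ ^ 2)
      have q1 : ‖G 0‖ ≤ 1 := by
        have hle : ‖G 0‖ ^ 2 ≤ 1 := by rw [← hTd]; exact hT1
        nlinarith [norm_nonneg (G 0)]
      have q2 : ‖z‖ * Real.exp (-(N * ‖z‖ ^ 2)) ≤ 1 := by
        rw [Real.exp_neg, ← div_eq_mul_inv, div_le_one (Real.exp_pos _)]
        have := Real.add_one_le_exp (N * ‖z‖ ^ 2)
        nlinarith [sq_nonneg (‖z‖ - 1), sq_nonneg ‖z‖]
      have q3 : ‖G 0‖ * (1 - ε * Real.exp (-(N * ‖z‖ ^ 2))) ≤ 1 :=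
        mul_le_one₀ q1 (by linarith) k4
      have q4 : (‖G 0‖ * (1 - ε * Real.exp (-(N * ‖z‖ ^ 2)))) * (‖z‖ * Real.exp (-(N * ‖z‖ ^ 2))) ≤ 1 :=
        mul_le_one₀ q3 (by positivity) q2
      have q5 : ‖deriv G z‖ ≤ ‖deriv G z‖ ^ 2 + 1 := by nlinarith [sq_nonneg (‖deriv G z‖ - 1)]
      calc _ = ((‖G 0‖ * (1 - ε * Real.exp (-(N * ‖z‖ ^ 2)))) * (‖z‖ * Real.exp (-(N * ‖z‖ ^ 2)))) * (‖deriv G z‖ * Real.exp (-‖z‖ ^ 2)) := by ring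
        _ ≤ 1 * (‖deriv G z‖ * Real.exp (-‖z‖ ^ 2)) := mul_le_mul_of_nonneg_right q4 (by positivity)
        _ ≤ 1 * ((‖deriv G z‖ ^ 2 + 1) * Real.exp (-‖z‖ ^ 2)) := by gcongr
        _ = _ := by ring
    refine ⟨?_, ?_⟩
    · have := hi.re
      simpa only [RCLike.re_eq_complex_re, Complex.re_mul_ofReal] using this
    · exact mean_radial_re (fun z => (starRingEnd ℂ) (G 0) * (z * deriv G z)) (by fun_prop)
        (fun r => (1 - ε * Real.exp (-(N * r ^ 2))) * Real.exp (-(N * r ^ 2)) * Real.exp (-r ^ 2)) (by fun_prop) (by simp) hi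
  set D : ℂ → ℝ := fun z => ‖deriv G z‖ ^ 2 + 4 * ε * N * (κ z * E z * ((starRingEnd ℂ) (G 0) * (z * deriv G z)).re)
    + 16 * ε * N * ((‖z‖ ^ 2) ^ 2 * (Real.exp (4 * ‖z‖ ^ 2) * E z))
    + 4 * ε ^ 2 * N ^ 2 * (1 + δ) * (‖z‖ ^ 2 * (E z ^ 2 * Real.exp (‖z‖ ^ 2))) with hDd
  have hD : ∀ z, ((fderiv ℝ f z 1) ^ 2 + (fderiv ℝ f z Complex.I) ^ 2) / (4 * f z) ≤ D z := by
    intro z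
    refine (gradD G hG ε N δ hε0 hε hN0 hδ z).trans ?_
    change κ z ^ 2 * ‖deriv G z‖ ^ 2 + 4 * ε * N * (κ z * E z) * ((starRingEnd ℂ) (G z) * (z * deriv G z)).re
      + (‖G z‖ ^ 2 + δ) * (4 * ε ^ 2 * N ^ 2 * (‖z‖ ^ 2 * E z ^ 2)) ≤ D z
    obtain ⟨k1, k2, k3, k4⟩ := kp z
    have t1 : κ z ^ 2 * ‖deriv G z‖ ^ 2 ≤ ‖deriv G z‖ ^ 2 := by
      have := mul_le_mul_of_nonneg_right (hP1 z).2 (sq_nonneg ‖deriv G z‖)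
      linarith
    obtain ⟨l1, l2⟩ := loc_bound G hG i0 n1 hd0 z
    have t2 : ((starRingEnd ℂ) (G z) * (z * deriv G z)).re ≤ ((starRingEnd ℂ) (G 0) * (z * deriv G z)).re
        + 4 * ((‖z‖ ^ 2) ^ 2 * Real.exp (4 * ‖z‖ ^ 2)) := by
      have e : (starRingEnd ℂ) (G z) * (z * deriv G z) = (starRingEnd ℂ) (G 0) * (z * deriv G z)
          + (starRingEnd ℂ) (G z - G 0) * (z * deriv G z) := by rw [map_sub]; ring
      rw [e, Complex.add_re]
      have := (Complex.re_le_norm ((starRingEnd ℂ) (G z - G 0) * (z * deriv G z)))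
      rw [norm_mul, RCLike.norm_conj] at this
      have h2 := mul_le_mul l1 l2 (norm_nonneg _) (by positivity)
      have e2 : Real.exp (4 * ‖z‖ ^ 2) = Real.exp (2 * ‖z‖ ^ 2) * Real.exp (2 * ‖z‖ ^ 2) := by
        rw [← Real.exp_add]; ring_nf
      rw [e2]
      linarith [show 2 * (‖z‖ ^ 2 * Real.exp (2 * ‖z‖ ^ 2)) * (2 * (‖z‖ ^ 2 * Real.exp (2 * ‖z‖ ^ 2)))
        = 4 * ((‖z‖ ^ 2) ^ 2 * (Real.exp (2 * ‖z‖ ^ 2) * Real.exp (2 * ‖z‖ ^ 2))) by ring]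
    have t3 := mul_le_mul_of_nonneg_left t2 (by positivity : 0 ≤ 4 * ε * N * (κ z * E z))
    have t4 : 4 * ε * N * (κ z * E z) * (4 * ((‖z‖ ^ 2) ^ 2 * Real.exp (4 * ‖z‖ ^ 2)))
        ≤ 16 * ε * N * ((‖z‖ ^ 2) ^ 2 * (Real.exp (4 * ‖z‖ ^ 2) * E z)) := by
      have := mul_le_mul_of_nonneg_right k4 (by positivity : 0 ≤ 16 * ε * N * ((‖z‖ ^ 2) ^ 2 * (Real.exp (4 * ‖z‖ ^ 2) * E z)))
      linarith
    have t5 : ‖G z‖ ^ 2 + δ ≤ (1 + δ) * Real.exp (‖z‖ ^ 2) := by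
      have h1 := hgw z
      have h2 : 1 ≤ Real.exp (‖z‖ ^ 2) := Real.one_le_exp (by positivity)
      nlinarith
    have t6 := mul_le_mul_of_nonneg_right t5 (by positivity : 0 ≤ 4 * ε ^ 2 * N ^ 2 * (‖z‖ ^ 2 * E z ^ 2))
    simp only [hDd]
    linarith
  have hDI : HI (fun z => D z * Real.exp (-‖z‖ ^ 2))
      ((∫ z : ℂ, ‖deriv G z‖ ^ 2 * Real.exp (-‖z‖ ^ 2)) + 4 * ε * N * 0 + 16 * ε * N * (Real.pi * (2:ℕ).factorial / (N - 3) ^ (2 + 1))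
        + 4 * ε ^ 2 * N ^ 2 * (1 + δ) * (Real.pi * (1:ℕ).factorial / (2 * N) ^ (1 + 1))) := by
    refine ((((HI.of i1).add (hM.smul (4 * ε * N))).add ((gm 2 (N - 3) (by linarith)).smul (16 * ε * N))).add
      ((gm 1 (2 * N) (by linarith)).smul (4 * ε ^ 2 * N ^ 2 * (1 + δ)))).congr ?_
    intro z
    have e1 : Real.exp (-((N - 3) * ‖z‖ ^ 2)) = Real.exp (4 * ‖z‖ ^ 2) * E z * Real.exp (-‖z‖ ^ 2) := by
      simp only [hEd]; rw [← Real.exp_add, ← Real.exp_add]; ring_nf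
    have e2 : Real.exp (-(2 * N * ‖z‖ ^ 2)) = E z ^ 2 * Real.exp (‖z‖ ^ 2) * Real.exp (-‖z‖ ^ 2) := by
      simp only [hEd]; rw [← Real.exp_nat_mul, ← Real.exp_add, ← Real.exp_add]; push_cast; ring_nf
    simp only [hDd]
    rw [e1, e2, pow_one]; ring
  -- masses
  have mG : HI (fun z : ℂ => ‖G z‖ ^ 2 * Real.exp (-‖z‖ ^ 2)) Real.pi := ⟨i0, n1⟩
  have mE : HI (fun z : ℂ => Real.exp (-‖z‖ ^ 2)) Real.pi := exp_int
  have mq0 : Integrable fun z : ℂ => ‖G z‖ ^ 2 * (1 - κ z ^ 2) * Real.exp (-‖z‖ ^ 2) := by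
    refine i0.mono' (by apply Continuous.aestronglyMeasurable; fun_prop) (Filter.Eventually.of_forall fun z => ?_)
    obtain ⟨p1, p2⟩ := hP1 z
    have h3 : 0 ≤ 1 - κ z ^ 2 := by linarith
    rw [Real.norm_of_nonneg (by positivity)]
    have : 1 - κ z ^ 2 ≤ 1 := by linarith
    have h5 : ‖G z‖ ^ 2 * (1 - κ z ^ 2) ≤ ‖G z‖ ^ 2 := mul_le_of_le_one_right (by positivity) this
    gcongr
  have mq := HI.of mq0
  set q := ∫ z : ℂ, ‖G z‖ ^ 2 * (1 - κ z ^ 2) * Real.exp (-‖z‖ ^ 2) with hq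
  have mp0 : Integrable fun z : ℂ => κ z ^ 2 * Real.exp (-‖z‖ ^ 2) := by
    refine exp_int.1.mono' (by apply Continuous.aestronglyMeasurable; fun_prop) (Filter.Eventually.of_forall fun z => ?_)
    obtain ⟨p1, p2⟩ := hP1 z
    rw [Real.norm_of_nonneg (by positivity)]
    exact mul_le_of_le_one_left (Real.exp_pos _).le p2
  have mp := HI.of mp0
  set p := ∫ z : ℂ, κ z ^ 2 * Real.exp (-‖z‖ ^ 2) with hp
  have hp0 : 0 ≤ p := integral_nonneg fun z => by positivity
  have hpp : p ≤ Real.pi := mp.mono mE fun z => mul_le_of_le_one_left (Real.exp_pos _).le (hP1 z).2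
  have hq0 : 0 ≤ q := integral_nonneg fun z => by
    have h3 : 0 ≤ 1 - κ z ^ 2 := by linarith [(hP1 z).2]
    positivity
  have hqq : q ≤ 2 * ε * Real.pi := mq.mono (mG.smul (2 * ε)) fun z => by
    obtain ⟨k1, k2, k3, k4⟩ := kp z
    have h3 : 1 - κ z ^ 2 ≤ 2 * ε := by simp only [hκd]; nlinarith [sq_nonneg (ε * E z)]
    have := mul_le_mul_of_nonneg_right h3 (by positivity : 0 ≤ ‖G z‖ ^ 2 * Real.exp (-‖z‖ ^ 2))
    linarith
  have mf : HI (fun z => f z * Real.exp (-‖z‖ ^ 2)) (Real.pi - q + δ * p) := by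
    refine ((mG.sub mq).add (mp.smul δ)).congr fun z => ?_
    simp only [hfd]; ring
  -- entropy
  have hflow : ∀ z, (‖G z‖ ^ 2 * Real.log (‖G z‖ ^ 2) + ε * a * (‖G z‖ ^ 2 * E z) - 2 * ε * (‖z‖ ^ 2 * ‖G z‖ ^ 2 * E z))
      + ‖G z‖ ^ 2 * (κ z ^ 2 - 1) + δ * Real.log δ - δ ≤ f z * Real.log (f z) := by
    intro z
    obtain ⟨k1, k2, k3, k4⟩ := kp z
    have h1 := xlogx_low (‖G z‖ ^ 2) (κ z ^ 2) δ (by positivity) (hP1 z).1 (hP1 z).2 hδ hδ1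
    have h2 := low_pt (‖G z‖ ^ 2) (κ z ^ 2) (E z) (‖z‖ ^ 2) a ε (by positivity) k1 k2 hε0 hε rfl ha (by positivity) (by
      rcases eq_or_ne (‖G z‖ ^ 2) 0 with hz | hz
      · rw [hz]; simp
      · have hzp : 0 < ‖G z‖ ^ 2 := lt_of_le_of_ne (by positivity) (Ne.symm hz)
        refine mul_le_mul_of_nonneg_left ?_ hzp.le
        have := Real.log_le_log hzp (hgw z)
        rw [Real.log_mul hTp.ne' (Real.exp_pos _).ne', Real.log_exp] at this
        rw [had]; linarith)
    linarith
  have iyw : Integrable fun z : ℂ => ‖z‖ ^ 2 * Real.exp (-‖z‖ ^ 2) := by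
    have := (gm 1 1 one_pos).1
    simpa only [pow_one, one_mul] using this
  have hif : Integrable fun z => f z * Real.log (f z) * Real.exp (-‖z‖ ^ 2) := by
    have hlog : Continuous fun z => Real.log (f z) := hfc.log fun z => (hfpos z).ne'
    refine ((((exp_int.1.const_mul 2).add i0).add iyw).add iy).mono' (by apply Continuous.aestronglyMeasurable; fun_prop)
      (Filter.Eventually.of_forall fun z => ?_)
    simp only [Pi.add_apply]
    have hfp := hfpos z
    have h1 : -1 ≤ f z * Real.log (f z) := by
      have := Real.one_sub_inv_le_log_of_pos hfp
      have h3 := mul_le_mul_of_nonneg_left this hfp.le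
      rw [mul_sub, mul_inv_cancel₀ hfp.ne'] at h3
      linarith
    have hfg : f z ≤ ‖G z‖ ^ 2 + δ := mul_le_of_le_one_right (by positivity) (hP1 z).2
    have h2 : Real.log (f z) ≤ 1 + ‖z‖ ^ 2 := by
      have h3 : f z ≤ 2 * Real.exp (‖z‖ ^ 2) := by
        have h1 := hgw z
        have h2 : 1 ≤ Real.exp (‖z‖ ^ 2) := Real.one_le_exp (by positivity)
        nlinarith
      have := Real.log_le_log hfp h3
      rw [Real.log_mul (by norm_num) (Real.exp_pos _).ne', Real.log_exp] at this
      linarith [Real.log_two_lt_d9]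
    have h3 : f z * Real.log (f z) ≤ (‖G z‖ ^ 2 + 1) * (1 + ‖z‖ ^ 2) :=
      (mul_le_mul_of_nonneg_left h2 hfp.le).trans (mul_le_mul_of_nonneg_right (by linarith) (by positivity))
    have hw := Real.exp_pos (-‖z‖ ^ 2)
    have e : 2 * Real.exp (-‖z‖ ^ 2) + ‖G z‖ ^ 2 * Real.exp (-‖z‖ ^ 2) + ‖z‖ ^ 2 * Real.exp (-‖z‖ ^ 2) + ‖G z‖ ^ 2 * (‖z‖ ^ 2 * Real.exp (-‖z‖ ^ 2))
      = (1 + (‖G z‖ ^ 2 + 1) * (1 + ‖z‖ ^ 2)) * Real.exp (-‖z‖ ^ 2) := by ring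
    rw [e, norm_mul, Real.norm_of_nonneg hw.le]
    refine mul_le_mul_of_nonneg_right ?_ hw.le
    rw [Real.norm_eq_abs, abs_le]
    have h5 : 0 ≤ (‖G z‖ ^ 2 + 1) * (1 + ‖z‖ ^ 2) := by positivity
    constructor <;> linarith
  -- J
  have mJ0 : Integrable fun z : ℂ => ‖G z‖ ^ 2 * E z * Real.exp (-‖z‖ ^ 2) := by
    refine i0.mono' (by apply Continuous.aestronglyMeasurable; fun_prop) (Filter.Eventually.of_forall fun z => ?_)
    obtain ⟨k1, k2, k3, k4⟩ := kp z
    rw [Real.norm_of_nonneg (by positivity)]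
    have h5 : ‖G z‖ ^ 2 * E z ≤ ‖G z‖ ^ 2 := mul_le_of_le_one_right (by positivity) k2
    gcongr
  have mJ := HI.of mJ0
  have mR : HI (fun z => ((starRingEnd ℂ) (G 0) * (G z - G 0)).re * (E z * Real.exp (-‖z‖ ^ 2))) 0 := by
    have hi : Integrable fun z : ℂ => ((starRingEnd ℂ) (G 0) * (G z - G 0)) *
        ((Real.exp (-(N * ‖z‖ ^ 2)) * Real.exp (-‖z‖ ^ 2) : ℝ) : ℂ) := by
      refine (i0.add (exp_int.1.const_mul 2)).mono' (by apply Continuous.aestronglyMeasurable; fun_prop)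
        (Filter.Eventually.of_forall fun z => ?_)
      obtain ⟨k1, k2, k3, k4⟩ := kp z
      simp only [hEd] at k1 k2
      rw [norm_mul, Complex.norm_real, Real.norm_of_nonneg (by positivity), norm_mul, RCLike.norm_conj]
      simp only [Pi.add_apply]
      have hw := Real.exp_pos (-‖z‖ ^ 2)
      have q1 : ‖G 0‖ ≤ 1 := by
        have hle : ‖G 0‖ ^ 2 ≤ 1 := by rw [← hTd]; exact hT1
        nlinarith [norm_nonneg (G 0)]
      have q2 : ‖G z - G 0‖ ≤ ‖G z‖ ^ 2 + 2 := by
        have := norm_sub_le (G z) (G 0)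
        nlinarith [sq_nonneg (‖G z‖ - 1)]
      have q3 : ‖G 0‖ * ‖G z - G 0‖ ≤ ‖G z‖ ^ 2 + 2 := (mul_le_of_le_one_left (norm_nonneg _) q1).trans q2
      have q4 : Real.exp (-(N * ‖z‖ ^ 2)) * Real.exp (-‖z‖ ^ 2) ≤ Real.exp (-‖z‖ ^ 2) := mul_le_of_le_one_left hw.le k2
      calc _ ≤ (‖G z‖ ^ 2 + 2) * Real.exp (-‖z‖ ^ 2) := mul_le_mul q3 q4 (by positivity) (by positivity)
        _ = _ := by ring
    refine ⟨?_, ?_⟩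
    · have := hi.re
      simpa only [RCLike.re_eq_complex_re, Complex.re_mul_ofReal] using this
    · exact mean_radial_re (fun z => (starRingEnd ℂ) (G 0) * (G z - G 0)) (by fun_prop)
        (fun r => Real.exp (-(N * r ^ 2)) * Real.exp (-r ^ 2)) (by fun_prop) (by simp) hi
  set J := ∫ z : ℂ, ‖G z‖ ^ 2 * E z * Real.exp (-‖z‖ ^ 2) with hJ
  have hJl : T * (Real.pi / (N + 1)) ≤ J := by
    have h1 := ((gm 0 (N + 1) (by linarith)).smul T).add (mR.smul 2)
    have h2 := h1.mono mJ (fun z => by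
      have e1 : Real.exp (-((N + 1) * ‖z‖ ^ 2)) = E z * Real.exp (-‖z‖ ^ 2) := by
        simp only [hEd]; rw [← Real.exp_add]; ring_nf
      obtain ⟨k1, k2, k3, k4⟩ := kp z
      rw [e1, pow_zero, one_mul]
      have e2 : ‖G z‖ ^ 2 = T + 2 * ((starRingEnd ℂ) (G 0) * (G z - G 0)).re + ‖G z - G 0‖ ^ 2 := by
        have : ‖G 0 + (G z - G 0)‖ ^ 2 = T + ‖G z - G 0‖ ^ 2 + 2 * (G 0 * (starRingEnd ℂ) (G z - G 0)).re := by
          rw [hTd]; simp only [Complex.sq_norm, Complex.normSq_add]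
        rw [add_sub_cancel] at this
        rw [this]
        simp only [Complex.mul_re, Complex.conj_re, Complex.conj_im]; ring
      rw [e2]
      have : 0 ≤ ‖G z - G 0‖ ^ 2 * (E z * Real.exp (-‖z‖ ^ 2)) := by positivity
      linarith)
    simpa using h2
  have mLow := ((((HI.of hent).add (mJ.smul (ε * a))).sub ((gm 1 N (by linarith)).smul (2 * ε))).sub mq).add
    (mE.smul (δ * Real.log δ - δ))
  have hEntLow := mLow.mono (HI.of hif) (fun z => by
    obtain ⟨k1, k2, k3, k4⟩ := kp z
    have hw := Real.exp_pos (-‖z‖ ^ 2)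
    have h1 := mul_le_mul_of_nonneg_right (hflow z) hw.le
    have h2 : ‖z‖ ^ 2 * ‖G z‖ ^ 2 * E z * Real.exp (-‖z‖ ^ 2) ≤ ‖z‖ ^ 2 * E z := by
      have := mul_le_mul_of_nonneg_left ((hb z).trans hT1) (by positivity : 0 ≤ ‖z‖ ^ 2 * E z)
      linarith
    have h3 := mul_le_mul_of_nonneg_left h2 (by positivity : 0 ≤ 2 * ε)
    rw [pow_one]
    simp only [hEd] at h1 h3 ⊢
    linarith)
  have main := lsiC f D hfC hfpos hD mf.1 hif hDI.1
  rw [mf.2, hDI.2] at main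
  set M := Real.pi - q + δ * p with hMd
  have hMp : 0 < M := by
    have h1 := mul_le_mul_of_nonneg_right hε4 hpi.le
    have h2 : 0 ≤ δ * p := by positivity
    rw [hMd]; linarith
  have hMlog : M * Real.log (M / Real.pi) ≤ M * (M / Real.pi - 1) :=
    mul_le_mul_of_nonneg_left (Real.log_le_sub_one_of_pos (by positivity)) hMp.le
  have hdel : δ * p ≤ δ * Real.pi := mul_le_mul_of_nonneg_left hpp hδ.le
  have hdel0 : 0 ≤ δ * p := by positivity
  -- M(M/π-1) = -(π - M) + (π-M)^2/π
  have hM2 : M * (M / Real.pi - 1) ≤ -(q - δ * Real.pi) + (2 * ε + δ) ^ 2 * Real.pi := by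
    have e : M * (M / Real.pi - 1) = -(q - δ * p) + (q - δ * p) ^ 2 / Real.pi := by
      rw [hMd]; field_simp; ring
    rw [e]
    have h1 : (q - δ * p) ^ 2 ≤ ((2 * ε + δ) * Real.pi) ^ 2 := by
      apply sq_le_sq'
      · nlinarith
      · nlinarith
    have h2 : (q - δ * p) ^ 2 / Real.pi ≤ (2 * ε + δ) ^ 2 * Real.pi := by
      rw [div_le_iff₀ hpi]; linarith
    linarith
  have hJa := mul_le_mul_of_nonneg_left hJl (by positivity : 0 ≤ ε * a)
  have e5 : 4 * ε ^ 2 * N ^ 2 * (1 + δ) * (Real.pi * (1:ℕ).factorial / (2 * N) ^ (1 + 1)) = Real.pi * (ε ^ 2 * (1 + δ)) := by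
    have : N ≠ 0 := by linarith
    simp; field_simp; ring
  have e6 : 16 * ε * N * (Real.pi * (2:ℕ).factorial / (N - 3) ^ (2 + 1)) = Real.pi * (32 * ε * N / (N - 3) ^ 3) := by
    simp [Nat.factorial]; ring
  have e7 : 2 * ε * (Real.pi * (1:ℕ).factorial / N ^ (1 + 1)) = Real.pi * (2 * ε / N ^ 2) := by
    simp; ring
  rw [e5, e6] at main
  rw [e7] at hEntLow
  linarith


lemma far_lim (G : ℂ → ℂ) (hG : Differentiable ℂ G)
    (i0 : Integrable fun z : ℂ => ‖G z‖ ^ 2 * Real.exp (-‖z‖ ^ 2))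
    (i1 : Integrable fun z : ℂ => ‖deriv G z‖ ^ 2 * Real.exp (-‖z‖ ^ 2))
    (n1 : ∫ z : ℂ, ‖G z‖ ^ 2 * Real.exp (-‖z‖ ^ 2) = Real.pi)
    (h0 : G 0 ≠ 0)
    (hb : ∀ z, ‖G z‖ ^ 2 * Real.exp (-‖z‖ ^ 2) ≤ ‖G 0‖ ^ 2)
    (hT1 : ‖G 0‖ ^ 2 ≤ 1) (ε N : ℝ) (hε0 : 0 ≤ ε) (hε4 : ε ≤ 1 / 4) (hN : 6 ≤ N) :
    ε * (-Real.log (‖G 0‖ ^ 2)) * (‖G 0‖ ^ 2 * (Real.pi / (N + 1)))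
      - Real.pi * (2 * ε / N ^ 2 + 32 * ε * N / (N - 3) ^ 3 + 5 * ε ^ 2)
    ≤ (∫ z : ℂ, ‖deriv G z‖ ^ 2 * Real.exp (-‖z‖ ^ 2)) -
      ∫ z : ℂ, ‖G z‖ ^ 2 * Real.log (‖G z‖ ^ 2) * Real.exp (-‖z‖ ^ 2) := by
  set d := (∫ z : ℂ, ‖deriv G z‖ ^ 2 * Real.exp (-‖z‖ ^ 2)) -
      ∫ z : ℂ, ‖G z‖ ^ 2 * Real.log (‖G z‖ ^ 2) * Real.exp (-‖z‖ ^ 2) with hd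
  set X := ε * (-Real.log (‖G 0‖ ^ 2)) * (‖G 0‖ ^ 2 * (Real.pi / (N + 1))) with hX
  set Y1 := 2 * ε / N ^ 2 + 32 * ε * N / (N - 3) ^ 3 with hY
  have hc : Continuous fun δ : ℝ => X - Real.pi * (Y1 + ε ^ 2 * (1 + δ) + (2 * ε + δ) ^ 2 + 2 * δ - δ * Real.log δ) := by
    have := Real.continuous_mul_log
    fun_prop
  have ht := (hc.tendsto 0).mono_left (nhdsWithin_le_nhds (s := Set.Ioi 0))
  have hle := le_of_tendsto ht (b := d) (by
    have hm : Set.Ioc (0:ℝ) 1 ∈ nhdsWithin (0:ℝ) (Set.Ioi 0) := Ioc_mem_nhdsGT one_pos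
    filter_upwards [hm] with δ hδ
    exact far_delta G hG i0 i1 n1 h0 hb hT1 ε N δ hε0 hε4 hN hδ.1 hδ.2)
  refine le_trans (le_of_eq ?_) hle
  simp; ring

lemma far_num (A x N : ℝ) (hA : 0 < A) (hA1 : A ≤ 1) (hx : A ≤ x) (hN : N = 6 + 2000 / A) :
    A ^ 2 / (320 * N ^ 2) ≤ A / (40 * N) * x * (1 / (N + 1)) -
      (2 * (A / (40 * N)) / N ^ 2 + 32 * (A / (40 * N)) * N / (N - 3) ^ 3 + 5 * (A / (40 * N)) ^ 2) := by
  have hq : 0 < 2000 / A := by positivity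
  have hN6 : 6 ≤ N := by linarith
  have hN0 : 0 < N := by linarith
  have hNA : 2000 ≤ A * N := by
    rw [hN, mul_add, mul_div_cancel₀ _ hA.ne']; linarith
  have h1 : 1 / (2 * N) ≤ 1 / (N + 1) := one_div_le_one_div_of_le (by linarith) (by linarith)
  have h2 : 32 * N / (N - 3) ^ 3 ≤ 256 / N ^ 2 := by
    have h3 : (N / 2) ^ 3 ≤ (N - 3) ^ 3 := pow_le_pow_left₀ (by linarith) (by linarith) 3
    have h4 : 0 < (N - 3) ^ 3 := lt_of_lt_of_le (by positivity) h3
    rw [div_le_div_iff₀ h4 (by positivity)]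
    nlinarith
  set e := A / (40 * N) with he
  have he0 : 0 < e := by positivity
  have h5 : A * (1 / (2 * N)) ≤ x * (1 / (N + 1)) := mul_le_mul hx h1 (by positivity) (by linarith)
  have h6 : 258 / N ^ 2 ≤ A / (4 * N) := by
    rw [div_le_div_iff₀ (by positivity) (by positivity)]
    nlinarith
  have h7 : A / (8 * N) ≤ x * (1 / (N + 1)) - (2 / N ^ 2 + 32 * N / (N - 3) ^ 3 + 5 * e) := by
    have g1 : 5 * e = A / (8 * N) := by rw [he]; field_simp; norm_num
    have g2 : A * (1 / (2 * N)) = 4 * (A / (8 * N)) := by field_simp; norm_num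
    have g3 : A / (4 * N) = 2 * (A / (8 * N)) := by field_simp; norm_num
    have g4 : 258 / N ^ 2 = 2 / N ^ 2 + 256 / N ^ 2 := by ring
    linarith
  have h8 := mul_le_mul_of_nonneg_left h7 he0.le
  calc A ^ 2 / (320 * N ^ 2) = e * (A / (8 * N)) := by rw [he]; field_simp; norm_num
    _ ≤ _ := h8
    _ = _ := by ring

lemma core : ∃ c : ℝ, 0 < c ∧ ∀ G : ℂ → ℂ, Differentiable ℂ G →
    (Integrable fun z : ℂ => ‖G z‖ ^ 2 * Real.exp (-‖z‖ ^ 2)) →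
    (Integrable fun z : ℂ => ‖deriv G z‖ ^ 2 * Real.exp (-‖z‖ ^ 2)) →
    ∫ z : ℂ, ‖G z‖ ^ 2 * Real.exp (-‖z‖ ^ 2) = Real.pi →
    (∀ z, ‖G z‖ ^ 2 * Real.exp (-‖z‖ ^ 2) ≤ ‖G 0‖ ^ 2) →
    c * (1 - ‖G 0‖ ^ 2) * Real.pi ≤ (∫ z : ℂ, ‖deriv G z‖ ^ 2 * Real.exp (-‖z‖ ^ 2)) -
      ∫ z : ℂ, ‖G z‖ ^ 2 * Real.log (‖G z‖ ^ 2) * Real.exp (-‖z‖ ^ 2) := by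
  set a0 := Real.log (1 + Real.exp (-30)) with ha0
  have he30 := Real.exp_pos (-30)
  have ha0p : 0 < a0 := Real.log_pos (by linarith)
  have ha01 : a0 ≤ 1 := by
    have h1 := Real.log_le_sub_one_of_pos (by positivity : 0 < 1 + Real.exp (-30))
    have h2 : Real.exp (-30) ≤ 1 := Real.exp_le_one_iff.2 (by norm_num)
    linarith
  set A := a0 * Real.exp (-2) with hA
  have hAp : 0 < A := by positivity
  have hA1 : A ≤ 1 := mul_le_one₀ ha01 (Real.exp_pos _).le (Real.exp_le_one_iff.2 (by norm_num))
  set N := 6 + 2000 / A with hN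
  have hq : 0 < 2000 / A := by positivity
  have hN6 : 6 ≤ N := by linarith
  set c0 := A ^ 2 / (320 * N ^ 2) with hc0
  have hc0p : 0 < c0 := by positivity
  have hpi := Real.pi_pos
  refine ⟨min c0 (1 / 10), by positivity, ?_⟩
  intro G hG i0 i1 n1 hb
  have hm1 := min_le_left c0 (1 / 10)
  have hm2 := min_le_right c0 (1 / 10)
  set c := min c0 (1 / 10) with hc
  have hcp : 0 < c := by positivity
  have h0 : G 0 ≠ 0 := by
    intro h
    have hz : ∀ z : ℂ, ‖G z‖ ^ 2 * Real.exp (-‖z‖ ^ 2) = 0 := fun z =>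
      le_antisymm (by simpa [h] using hb z) (by positivity)
    simp only [hz, integral_zero] at n1
    linarith
  have hT1 : ‖G 0‖ ^ 2 ≤ 1 := by
    have := ptwise G hG i0 0
    rw [n1] at this
    simp only [norm_zero, ne_eq, OfNat.ofNat_ne_zero, not_false_eq_true, zero_pow, neg_zero, Real.exp_zero, mul_one] at this
    exact (mul_le_iff_le_one_left hpi).1 this
  have hTp : 0 < ‖G 0‖ ^ 2 := by positivity
  by_cases c1 : 1 - ‖G 0‖ ^ 2 ≤ Real.exp (-30) * ‖G 0‖ ^ 2
  · refine le_trans ?_ (near G hG i0 i1 n1 h0 hb hT1 c1)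
    exact mul_le_mul_of_nonneg_right (mul_le_mul_of_nonneg_right hm2 (by linarith)) hpi.le
  by_cases c2 : ‖G 0‖ ^ 2 ≤ Real.exp (-2)
  · obtain ⟨_, e2, e3⟩ := ent G hG i0 i1 (fun z => (hb z).trans hT1)
    rw [e3, n1]
    have hmono := (HI.of e2).mono ((HI.of i0).smul (-2)) (fun z => by
      have hu : 0 ≤ ‖G z‖ ^ 2 * Real.exp (-‖z‖ ^ 2) := by positivity
      have hu2 := (hb z).trans c2
      set u := ‖G z‖ ^ 2 * Real.exp (-‖z‖ ^ 2)
      rcases hu.eq_or_lt with h | h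
      · rw [← h]; simp
      · have hl : Real.log u ≤ -2 := (Real.log_le_iff_le_exp h).2 hu2
        rw [mul_comm]
        exact mul_le_mul_of_nonneg_right hl hu)
    rw [n1] at hmono
    have hx : c * (1 - ‖G 0‖ ^ 2) ≤ 1 := mul_le_one₀ (by linarith) (by linarith) (by linarith)
    have := mul_le_mul_of_nonneg_right hx hpi.le
    linarith
  · push Not at c1 c2
    have hl : a0 ≤ -Real.log (‖G 0‖ ^ 2) := by
      rw [← Real.log_inv]
      apply Real.log_le_log (by positivity)
      rw [le_inv_comm₀ (by positivity) hTp, ← one_div, le_div_iff₀ (by positivity)]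
      linarith
    have hx : A ≤ -Real.log (‖G 0‖ ^ 2) * ‖G 0‖ ^ 2 :=
      mul_le_mul hl c2.le (Real.exp_pos _).le (ha0p.le.trans hl)
    have hnum := far_num A _ N hAp hA1 hx hN
    have hfar := far_lim G hG i0 i1 n1 h0 hb hT1 (A / (40 * N)) N (by positivity)
      (by rw [div_le_iff₀ (by positivity)]; linarith) hN6
    refine le_trans ?_ hfar
    have h1 : c * (1 - ‖G 0‖ ^ 2) ≤ c0 := (mul_le_of_le_one_right hcp.le (by linarith)).trans hm1
    have h2 := mul_le_mul_of_nonneg_right (h1.trans hnum) hpi.le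
    refine h2.trans (le_of_eq ?_)
    ring

theorem stmt4 :
    ∃ cstar : ℝ, 0 < cstar ∧
      ∀ F : ℂ → ℂ, Differentiable ℂ F →
        Integrable (fun z : ℂ => ‖F z‖ ^ 2 * Real.exp (-‖z‖ ^ 2)) →
        Integrable (fun z : ℂ => ‖deriv F z‖ ^ 2 * Real.exp (-‖z‖ ^ 2)) →
        fockNorm F = 1 →
        gammaInt (fun z => ‖F z‖ ^ 2 * Real.log (‖F z‖ ^ 2)) +
            cstar * (⨅ p : ℂ × Metric.sphere (0 : ℂ) 1,
              (fockNorm (fun z =>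
                F z - p.2.1 * Complex.exp (p.1 * z - ((‖p.1‖ ^ 2 / 2 : ℝ) : ℂ)))) ^ 2)
          ≤ gammaInt (fun z => ‖deriv F z‖ ^ 2) := by
  have hpi := Real.pi_pos
  obtain ⟨c, hc, hcore⟩ := core
  refine ⟨c / 2, by positivity, fun F hF i0 i1 hn => ?_⟩
  have n1 : ∫ z : ℂ, ‖F z‖ ^ 2 * Real.exp (-‖z‖ ^ 2) = Real.pi := by
    unfold fockNorm at hn
    rw [Real.sqrt_eq_one] at hn
    field_simp at hn
    exact hn
  have u1 : ∀ z, ‖F z‖ ^ 2 * Real.exp (-‖z‖ ^ 2) ≤ 1 := by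
    intro z
    have := ptwise F hF i0 z
    rw [n1] at this
    nlinarith
  obtain ⟨ξ, hξ0, hξ⟩ := exists_max F hF i0 i1 n1
  set G := tr ξ F with hG
  have hGd : Differentiable ℂ G := tr_diff ξ F hF
  have g0 : Integrable fun z : ℂ => ‖G z‖ ^ 2 * Real.exp (-‖z‖ ^ 2) := tr_integrable ξ F i0
  have g1 : Integrable fun z : ℂ => ‖deriv G z‖ ^ 2 * Real.exp (-‖z‖ ^ 2) := tr_deriv_integrable ξ F hF i0 i1
  have gn : ∫ z : ℂ, ‖G z‖ ^ 2 * Real.exp (-‖z‖ ^ 2) = Real.pi := by rw [tr_int, n1]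
  have gb : ∀ z, ‖G z‖ ^ 2 * Real.exp (-‖z‖ ^ 2) ≤ ‖G 0‖ ^ 2 := by
    intro z; rw [tr_u, tr_zero]; exact hξ _
  have hT : 0 < ‖G 0‖ ^ 2 := by rw [tr_zero]; exact hξ0
  have hT1 : ‖G 0‖ ^ 2 ≤ 1 := by rw [tr_zero]; exact u1 ξ
  have hS : 0 < ‖G 0‖ := by
    rcases (norm_nonneg (G 0)).eq_or_lt with h | h
    · rw [← h] at hT; norm_num at hT
    · exact h
  have hS1 : ‖G 0‖ ≤ 1 := by nlinarith
  have key := hcore G hGd g0 g1 gn gb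
  -- translation invariance of the deficit
  have e1 := (ent F hF i0 i1 u1).2.2
  have e2 := (ent G hGd g0 g1 (fun z => (gb z).trans hT1)).2.2
  rw [n1] at e1
  rw [gn] at e2
  have e3 : ∫ z : ℂ, (‖G z‖ ^ 2 * Real.exp (-‖z‖ ^ 2)) * Real.log (‖G z‖ ^ 2 * Real.exp (-‖z‖ ^ 2))
      = ∫ z : ℂ, (‖F z‖ ^ 2 * Real.exp (-‖z‖ ^ 2)) * Real.log (‖F z‖ ^ 2 * Real.exp (-‖z‖ ^ 2)) := by
    simp only [hG, tr_u]
    exact integral_add_right_eq_self (fun z : ℂ => (‖F z‖ ^ 2 * Real.exp (-‖z‖ ^ 2)) * Real.log (‖F z‖ ^ 2 * Real.exp (-‖z‖ ^ 2))) ξ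
  rw [e2, e3, ← e1] at key
  -- the distance
  set cc : ℂ := G 0 / ‖G 0‖ with hcc
  have hSc : (‖G 0‖ : ℂ) ≠ 0 := by exact_mod_cast hS.ne'
  have hcn : ‖cc‖ = 1 := by
    rw [hcc, norm_div, Complex.norm_real, norm_norm, div_self hS.ne']
  have hd := (dist_const G hGd g0 gn cc hcn (by rw [hcc]; field_simp)).2
  set p : ℂ × Metric.sphere (0 : ℂ) 1 := ((starRingEnd ℂ) ξ, ⟨cc, by simpa using hcn⟩) with hp
  have hinf : (⨅ p : ℂ × Metric.sphere (0 : ℂ) 1,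
              (fockNorm (fun z =>
                F z - p.2.1 * Complex.exp (p.1 * z - ((‖p.1‖ ^ 2 / 2 : ℝ) : ℂ)))) ^ 2) ≤ 2 * (1 - ‖G 0‖ ^ 2) := by
    refine (ciInf_le ⟨0, ?_⟩ p).trans ?_
    · rintro _ ⟨q, rfl⟩; positivity
    · unfold fockNorm
      rw [Real.sq_sqrt (mul_nonneg (by positivity) (integral_nonneg fun z => by positivity))]
      rw [← tr_int ξ]
      have : ∀ z, tr ξ (fun z => F z - p.2.1 * Complex.exp (p.1 * z - ((‖p.1‖ ^ 2 / 2 : ℝ) : ℂ))) z = G z - cc := by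
        intro z
        simp only [hG, tr, hp, sub_mul]
        congr 1
        rw [mul_assoc, ← Complex.exp_add]
        have : (starRingEnd ℂ) ξ * (z + ξ) - ((‖(starRingEnd ℂ) ξ‖ ^ 2 / 2 : ℝ) : ℂ) +
          (-(z * (starRingEnd ℂ) ξ) - ((‖ξ‖ ^ 2 / 2 : ℝ) : ℂ)) = 0 := by
          have h1 : (starRingEnd ℂ) ξ * ξ = ((‖ξ‖ ^ 2 : ℝ) : ℂ) := by
            rw [mul_comm, Complex.mul_conj, Complex.sq_norm]
          rw [RCLike.norm_conj, mul_add, h1]; push_cast; ring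
        rw [this]; simp
      simp only [this, hd]
      field_simp
      nlinarith
  unfold gammaInt
  have h5 := mul_le_mul_of_nonneg_left hinf (by positivity : 0 ≤ c / 2)
  have h6 : c / 2 * (2 * (1 - ‖G 0‖ ^ 2)) = (1 / Real.pi) * (c * (1 - ‖G 0‖ ^ 2) * Real.pi) := by
    field_simp
  have h7 := mul_le_mul_of_nonneg_left key (by positivity : 0 ≤ 1 / Real.pi)
  rw [← h6, mul_sub] at h7
  linarith
end

section
/- Let H be a reproducing kernel Hilbert space of real- or complex-valued functions isometrically embedded in L²(Ω, μ) for some measure space (Ω, μ). Fix F ∈ H and ε > 0. Suppose there exists C > 0 such that every G ∈ H with inf_{|λ|=1} ‖F − λG‖_{L²} < ε satisfies inf_{|λ|=1} ‖F − λG‖_{L²} ≤ C ‖ |F| − |G| ‖_{L²}. Suppose also that phase retrieval holds at F, i.e., if G ∈ H and |F| = |G| almost everywhere then F = λG for some unimodular scalar λ. Then there exists C' > 0 such that for all G ∈ H, inf_{|λ|=1} ‖F − λG‖_{L²} ≤ C' ‖ |F| − |G| ‖_{L²}. -/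
open MeasureTheory


theorem aux_memLp {𝕜 : Type*} [RCLike 𝕜] {Ω : Type*} [MeasurableSpace Ω] (μ : Measure Ω)
    {H : Type*} [NormedAddCommGroup H] [InnerProductSpace 𝕜 H]
    (ev : H →ₗ[𝕜] (Ω → 𝕜))
    (hiso : ∀ f : H, ∫ x, ‖ev f x‖ ^ 2 ∂μ = ‖f‖ ^ 2) (f : H) :
    MemLp (fun x => ‖ev f x‖) 2 μ := by
  have hint : Integrable (fun x => ‖ev f x‖ ^ 2) μ := by
    by_cases hf : f = 0
    · subst hf; simp
    · by_contra h
      have h1 := hiso f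
      rw [integral_undef h] at h1
      have : 0 < ‖f‖ := norm_pos_iff.mpr hf
      nlinarith
  have hm : AEStronglyMeasurable (fun x => ‖ev f x‖) μ := by
    have := Real.continuous_sqrt.comp_aestronglyMeasurable hint.aestronglyMeasurable
    refine this.congr (Filter.Eventually.of_forall fun x => ?_)
    simp [Real.sqrt_sq]
  exact (memLp_two_iff_integrable_sq hm).2 hint

theorem aux_norm {Ω : Type*} [MeasurableSpace Ω] (μ : Measure Ω) (a : Ω → ℝ)
    (ha : MemLp a 2 μ) : ‖ha.toLp a‖ = Real.sqrt (∫ x, a x ^ 2 ∂μ) := by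
  have h : ‖ha.toLp a‖ ^ 2 = ∫ x, a x ^ 2 ∂μ := by
    rw [← real_inner_self_eq_norm_sq, L2.inner_def]
    refine integral_congr_ae ?_
    filter_upwards [ha.coeFn_toLp] with x hx
    simp [hx, sq]
  rw [← h, Real.sqrt_sq (norm_nonneg _)]

theorem aux_tri {Ω : Type*} [MeasurableSpace Ω] (μ : Measure Ω) (a b : Ω → ℝ)
    (ha : MemLp a 2 μ) (hb : MemLp b 2 μ) :
    |Real.sqrt (∫ x, b x ^ 2 ∂μ) - Real.sqrt (∫ x, a x ^ 2 ∂μ)|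
      ≤ Real.sqrt (∫ x, (a x - b x) ^ 2 ∂μ) := by
  have h := aux_norm μ _ (ha.sub hb)
  simp only [Pi.sub_apply] at h
  rw [← h, ← aux_norm μ a ha, ← aux_norm μ b hb, MemLp.toLp_sub, norm_sub_rev]
  exact abs_norm_sub_norm_le _ _

theorem aux_ae {Ω : Type*} [MeasurableSpace Ω] (μ : Measure Ω) (a : ℕ → Ω → ℝ)
    (ha : ∀ n, MemLp (a n) 2 μ)
    (h : Filter.Tendsto (fun n => ∫ x, a n x ^ 2 ∂μ) Filter.atTop (nhds 0)) :
    ∃ ns : ℕ → ℕ, StrictMono ns ∧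
      ∀ᵐ x ∂μ, Filter.Tendsto (fun i => a (ns i) x) Filter.atTop (nhds 0) := by
  have hi : ∀ n, Integrable (fun x => a n x ^ 2) μ := fun n => (ha n).integrable_sq
  have hT : TendstoInMeasure μ (fun n x => a n x ^ 2) Filter.atTop (fun _ => (0:ℝ)) := by
    refine tendstoInMeasure_of_tendsto_eLpNorm (p := 1) one_ne_zero
      (fun n => (hi n).aestronglyMeasurable) aestronglyMeasurable_const ?_
    have h2 : ∀ n, eLpNorm ((fun x => a n x ^ 2) - fun _ => (0:ℝ)) 1 μ
        = ENNReal.ofReal (∫ x, a n x ^ 2 ∂μ) := by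
      intro n
      rw [eLpNorm_one_eq_lintegral_enorm, ofReal_integral_eq_lintegral_ofReal (hi n)
        (Filter.Eventually.of_forall fun x => sq_nonneg _)]
      refine lintegral_congr fun x => ?_
      simp only [Pi.sub_apply, sub_zero]
      exact Real.enorm_eq_ofReal (sq_nonneg _)
    simp only [h2]
    simpa using ENNReal.tendsto_ofReal h
  obtain ⟨ns, hns, hae⟩ := hT.exists_seq_tendsto_ae
  refine ⟨ns, hns, ?_⟩
  filter_upwards [hae] with x hx
  have h3 := (Real.continuous_sqrt.tendsto 0).comp hx
  simp only [Real.sqrt_zero, Function.comp_def, Real.sqrt_sq_eq_abs] at h3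
  exact (tendsto_zero_iff_abs_tendsto_zero _).2 h3

theorem aux_weak {𝕜 : Type*} [RCLike 𝕜] {H : Type*} [NormedAddCommGroup H]
    [InnerProductSpace 𝕜 H] [CompleteSpace H] (U : Ultrafilter ℕ) (g : ℕ → H) (R : ℝ)
    (hR : ∀ n, ‖g n‖ ≤ R) :
    ∃ G : H, ∀ h : H, Filter.Tendsto (fun n => inner 𝕜 (g n) h) U (nhds (inner 𝕜 G h)) := by
  have hc := WeakDual.isCompact_closedBall (𝕜 := 𝕜) (E := H) 0 R
  obtain ⟨φ, -, hφ⟩ := hc.ultrafilter_le_nhds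
    (U.map fun n => StrongDual.toWeakDual (InnerProductSpace.toDual 𝕜 H (g n))) (by
      rw [Filter.le_principal_iff]
      refine Filter.mem_map.2 (Filter.Eventually.of_forall fun n => ?_)
      simpa using hR n)
  refine ⟨(InnerProductSpace.toDual 𝕜 H).symm (WeakDual.toStrongDual φ), fun h => ?_⟩
  have h1 : Filter.Tendsto
      (fun n => StrongDual.toWeakDual (InnerProductSpace.toDual 𝕜 H (g n))) U (nhds φ) := hφ
  have h2 := ((WeakDual.eval_continuous h).tendsto φ).comp h1
  rw [InnerProductSpace.toDual_symm_apply]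
  exact h2

/-- **Local reduction in a reproducing kernel Hilbert space.**
`H` is a Hilbert space over `𝕜 = ℝ` or `ℂ`, realized as a space of functions on `Ω`
via the linear map `ev` with bounded point evaluations (RKHS), isometrically embedded
in `L²(Ω, μ)`. If local stability holds at `F` for all `G` within distance `ε` of the
circle through `F`, and phase retrieval holds at `F`, then local stability holds at `F`
for all `G ∈ H`. -/
theorem stmt5 {𝕜 : Type*} [RCLike 𝕜] {Ω : Type*} [MeasurableSpace Ω] (μ : Measure Ω)
    {H : Type*} [NormedAddCommGroup H] [InnerProductSpace 𝕜 H] [CompleteSpace H]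
    (ev : H →ₗ[𝕜] (Ω → 𝕜))
    (hpoint : ∀ x : Ω, ∃ Cx : ℝ, ∀ f : H, ‖ev f x‖ ≤ Cx * ‖f‖)
    (hiso : ∀ f : H, ∫ x, ‖ev f x‖ ^ 2 ∂μ = ‖f‖ ^ 2)
    (F : H) (ε : ℝ) (hε : 0 < ε) (C : ℝ) (hC : 0 < C)
    (hloc : ∀ G : H,
        (⨅ θ : Metric.sphere (0 : 𝕜) 1, ‖F - θ.1 • G‖) < ε →
        (⨅ θ : Metric.sphere (0 : 𝕜) 1, ‖F - θ.1 • G‖)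
          ≤ C * Real.sqrt (∫ x, (‖ev F x‖ - ‖ev G x‖) ^ 2 ∂μ))
    (hPR : ∀ G : H, (∀ᵐ x ∂μ, ‖ev F x‖ = ‖ev G x‖) →
        ∃ θ : 𝕜, ‖θ‖ = 1 ∧ F = θ • G) :
    ∃ C' : ℝ, 0 < C' ∧ ∀ G : H,
      (⨅ θ : Metric.sphere (0 : 𝕜) 1, ‖F - θ.1 • G‖)
        ≤ C' * Real.sqrt (∫ x, (‖ev F x‖ - ‖ev G x‖) ^ 2 ∂μ) := by
  classical
  by_contra hcon
  push Not at hcon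
  have hd0 : ∀ G : H, ∀ θ : 𝕜, ‖θ‖ = 1 →
      (⨅ θ : Metric.sphere (0 : 𝕜) 1, ‖F - θ.1 • G‖) ≤ ‖F - θ • G‖ := by
    intro G θ hθ
    exact ciInf_le (f := fun θ : Metric.sphere (0 : 𝕜) 1 => ‖F - θ.1 • G‖)
      ⟨0, by rintro _ ⟨y, rfl⟩; exact norm_nonneg _⟩ ⟨θ, by simpa using hθ⟩
  have hM := aux_memLp μ ev hiso
  have htri : ∀ G : H, |‖G‖ - ‖F‖| ≤ Real.sqrt (∫ x, (‖ev F x‖ - ‖ev G x‖) ^ 2 ∂μ) := by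
    intro G
    have := aux_tri μ _ _ (hM F) (hM G)
    simpa only [hiso, Real.sqrt_sq (norm_nonneg _)] using this
  choose g hg using fun n : ℕ => hcon (n + 2 + C) (by positivity)
  obtain ⟨t, ht⟩ : ∃ t : ℕ → ℝ,
    t = fun n => Real.sqrt (∫ x, (‖ev F x‖ - ‖ev (g n) x‖) ^ 2 ∂μ) := ⟨_, rfl⟩
  have ht' : ∀ n, Real.sqrt (∫ x, (‖ev F x‖ - ‖ev (g n) x‖) ^ 2 ∂μ) = t n := by simp [ht]
  have ht0 : ∀ n, 0 ≤ t n := fun n => by rw [← ht']; positivity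
  have hfar : ∀ n, ε ≤ ⨅ θ : Metric.sphere (0 : 𝕜) 1, ‖F - θ.1 • g n‖ := by
    intro n
    by_contra! hlt
    have h1 := hloc _ hlt
    have h2 := hg n
    rw [ht'] at h1 h2
    have : 0 ≤ ((n:ℝ) + 2) * t n := mul_nonneg (by positivity) (ht0 n)
    nlinarith
  have hbd : ∀ n : ℕ, ((n:ℝ) + 1) * t n ≤ 2 * ‖F‖ := by
    intro n
    have h1 := hd0 (g n) 1 (by simp)
    have h2 := hg n
    have h3 := (abs_le.1 (htri (g n))).2
    rw [ht'] at h2 h3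
    rw [one_smul] at h1
    have h4 := norm_sub_le F (g n)
    have h5 := mul_nonneg hC.le (ht0 n)
    nlinarith
  have htlim : Filter.Tendsto t Filter.atTop (nhds 0) := by
    refine squeeze_zero ht0 (g := fun n : ℕ => (2 * ‖F‖) * (1 / ((n:ℝ) + 1))) (fun n => ?_) ?_
    · have h0 : (0:ℝ) < n + 1 := by positivity
      rw [mul_one_div, le_div_iff₀ h0]
      linarith [hbd n]
    · simpa using tendsto_one_div_add_atTop_nhds_zero_nat.const_mul (2 * ‖F‖)
  have hgb : ∀ n, ‖g n‖ ≤ 3 * ‖F‖ := by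
    intro n
    have h3 := (abs_le.1 (htri (g n))).2
    rw [ht'] at h3
    have h4 := hbd n
    have h5 : 0 ≤ (n:ℝ) * t n := mul_nonneg (by positivity) (ht0 n)
    nlinarith
  obtain ⟨ns, hns, hae⟩ := aux_ae μ (fun n x => ‖ev F x‖ - ‖ev (g n) x‖)
    (fun n => (hM F).sub (hM (g n))) (by
      have h1 := htlim.pow 2
      rw [zero_pow two_ne_zero] at h1
      refine h1.congr fun n => ?_
      rw [← ht', Real.sq_sqrt (integral_nonneg fun x => sq_nonneg _)])
  have hU : ((Filter.hyperfilter ℕ : Ultrafilter ℕ) : Filter ℕ) ≤ Filter.atTop := by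
    rw [← Nat.cofinite_eq_atTop]; exact Filter.hyperfilter_le_cofinite
  obtain ⟨G, hG⟩ := aux_weak (𝕜 := 𝕜) (Filter.hyperfilter ℕ) (fun i => g (ns i)) _
    (fun i => hgb (ns i))
  have hev : ∀ x, Filter.Tendsto (fun i => ev (g (ns i)) x) (Filter.hyperfilter ℕ)
      (nhds (ev G x)) := by
    intro x
    obtain ⟨Cx, hCx⟩ := hpoint x
    let L : StrongDual 𝕜 H := LinearMap.mkContinuous ((LinearMap.proj x).comp ev) Cx hCx
    have hL : ∀ f, ev f x = inner 𝕜 ((InnerProductSpace.toDual 𝕜 H).symm L) f := by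
      intro f; rw [InnerProductSpace.toDual_symm_apply]; rfl
    simp only [hL]
    have h1 := (RCLike.continuous_conj.tendsto _).comp
      (hG ((InnerProductSpace.toDual 𝕜 H).symm L))
    simpa only [Function.comp_def, inner_conj_symm] using h1
  obtain ⟨θ, hθ, hFG⟩ := hPR G (by
    filter_upwards [hae] with x hx
    have h1 := hx.mono_left hU
    have h2 := ((hev x).norm).const_sub ‖ev F x‖
    have := tendsto_nhds_unique h1 h2
    linarith)
  have hnFG : ‖F‖ = ‖G‖ := by rw [hFG, norm_smul, hθ, one_mul]
  have hnorm : Filter.Tendsto (fun i => ‖g (ns i)‖) (Filter.hyperfilter ℕ) (nhds ‖G‖) := by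
    rw [← hnFG, tendsto_iff_norm_sub_tendsto_zero]
    refine squeeze_zero (fun _ => norm_nonneg _) (fun i => ?_)
      ((htlim.comp hns.tendsto_atTop).mono_left hU)
    have := htri (g (ns i))
    rw [ht'] at this
    exact this
  have hlim : Filter.Tendsto (fun i => ‖g (ns i) - G‖ ^ 2) (Filter.hyperfilter ℕ) (nhds 0) := by
    have h1 := (RCLike.continuous_re.tendsto _).comp (hG G)
    have h2 := ((hnorm.pow 2).sub (h1.const_mul 2)).add_const (‖G‖ ^ 2)
    have h3 : ‖G‖ ^ 2 - 2 * RCLike.re (inner 𝕜 G G) + ‖G‖ ^ 2 = 0 := by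
      rw [← norm_sq_eq_re_inner]; ring
    rw [h3] at h2
    refine h2.congr fun i => ?_
    rw [norm_sub_sq (𝕜 := 𝕜)]; rfl
  obtain ⟨i, hi⟩ := (hlim.eventually (gt_mem_nhds (show 0 < ε ^ 2 by positivity))).exists
  have h1 := hfar (ns i)
  have h2 := hd0 (g (ns i)) θ hθ
  have h3 : ‖F - θ • g (ns i)‖ = ‖g (ns i) - G‖ := by
    rw [hFG, ← smul_sub, norm_smul, hθ, one_mul, norm_sub_rev]
  have h4 := lt_of_pow_lt_pow_left₀ 2 hε.le hi
  linarith
end
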